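/- arXiv:2211.02871 — 5 statements merged into one kernel-verified Lean document; each statement's English description precedes it below -/
import Mathlib

section
/- Let N ≥ 2 and let 𝟙_S be the projector onto the symmetric subspace of N qubits. The partial transpose (𝟙_S)^{T_{{0}}} with respect to qubit 0 is positive semidefinite, and its smallest nonzero eigenvalue equals 1/N (in particular, 1/N is an eigenvalue and every eigenvalue is either 0 or at least 1/N). -/
open scoped ComplexOrder

noncomputable section

/-- Separability of an `N`-qubit matrix across the bipartition `X : Xᶜ`. -/
def SepAcross {N : ℕ} (X : Finset (Fin N))
    (σ : Matrix (Fin N → Fin 2) (Fin N → Fin 2) ℂ) : Prop :=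
  ∃ (K : ℕ)
    (A : Fin K → Matrix ({i // i ∈ X} → Fin 2) ({i // i ∈ X} → Fin 2) ℂ)
    (B : Fin K → Matrix ({i // i ∈ Xᶜ} → Fin 2) ({i // i ∈ Xᶜ} → Fin 2) ℂ),
    (∀ k, (A k).PosSemidef) ∧ (∀ k, (B k).PosSemidef) ∧
    ∀ x y, σ x y =
      ∑ k, A k (fun i => x i.1) (fun i => y i.1) * B k (fun i => x i.1) (fun i => y i.1)

/-- Partial transpose with respect to the qubits in `X`. -/
def pt {N : ℕ} (X : Finset (Fin N))
    (σ : Matrix (Fin N → Fin 2) (Fin N → Fin 2) ℂ) :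
    Matrix (Fin N → Fin 2) (Fin N → Fin 2) ℂ :=
  fun x y => σ (fun i => if i ∈ X then y i else x i) (fun i => if i ∈ X then x i else y i)

/-- The Dicke state `|S_k^N⟩`. -/
def dicke (N k : ℕ) : (Fin N → Fin 2) → ℂ :=
  fun x => if (Finset.univ.filter (fun i => x i = 1)).card = k
    then ((Real.sqrt (N.choose k))⁻¹ : ℝ) else 0

/-- The projector onto the symmetric subspace of `N` qubits. -/
def symProj (N : ℕ) : Matrix (Fin N → Fin 2) (Fin N → Fin 2) ℂ :=
  fun x y => ∑ k ∈ Finset.range (N + 1), dicke N k x * star (dicke N k y)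

/-- Full separability of an `N`-qubit matrix. -/
def FullySep {N : ℕ} (σ : Matrix (Fin N → Fin 2) (Fin N → Fin 2) ℂ) : Prop :=
  ∃ (K : ℕ) (A : Fin K → Fin N → Matrix (Fin 2) (Fin 2) ℂ),
    (∀ k i, (A k i).PosSemidef) ∧
    ∀ x y, σ x y = ∑ k, ∏ i, A k i (x i) (y i)

/-- The second Pauli matrix. -/
def pauliY : Matrix (Fin 2) (Fin 2) ℂ := !![0, -Complex.I; Complex.I, 0]

/-- The `N`-qubit operator acting as `σy` on each qubit in `X` and trivially elsewhere. -/
def pauliYat {N : ℕ} (X : Finset (Fin N)) :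
    Matrix (Fin N → Fin 2) (Fin N → Fin 2) ℂ :=
  fun x y => ∏ i, if i ∈ X then pauliY (x i) (y i) else (if x i = y i then 1 else 0)

/-- `(σy@X) · ρ^{T_X} · (σy@X)`. -/
def tildeAt {N : ℕ} (X : Finset (Fin N))
    (ρ : Matrix (Fin N → Fin 2) (Fin N → Fin 2) ℂ) :
    Matrix (Fin N → Fin 2) (Fin N → Fin 2) ℂ :=
  pauliYat X * pt X ρ * pauliYat X

/-- The Hankel matrix `M_l(q)` with entries `q_{i+j+l} / (N choose (i+j+l))`. -/
def hankel (N l : ℕ) (q : ℕ → ℝ) :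
    Matrix (Fin ((N - l) / 2 + 1)) (Fin ((N - l) / 2 + 1)) ℝ :=
  fun i j => q ((i : ℕ) + j + l) / (N.choose ((i : ℕ) + j + l))

/-- The diagonal symmetric state `Σ_k p_k |S_k^N⟩⟨S_k^N|`. -/
def rhoDS (N : ℕ) (p : ℕ → ℝ) : Matrix (Fin N → Fin 2) (Fin N → Fin 2) ℂ :=
  fun x y => ∑ k ∈ Finset.range (N + 1), (p k : ℂ) * dicke N k x * star (dicke N k y)

/-- Hamming weight. -/
def wt {n : ℕ} (x : Fin n → Fin 2) : ℕ := (Finset.univ.filter (fun i => x i = 1)).card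

lemma wt_le {n : ℕ} (x : Fin n → Fin 2) : wt x ≤ n := by
  simpa [wt] using Finset.card_filter_le (Finset.univ : Finset (Fin n)) (fun i => x i = 1)

lemma wt_cons {n : ℕ} (s : Fin 2) (u : Fin n → Fin 2) :
    wt (Fin.cons s u : Fin (n+1) → Fin 2) = (s : ℕ) + wt u := by
  unfold wt
  rw [Fin.card_filter_univ_succ]
  fin_cases s <;> simp [add_comm]

lemma card_wt (n k : ℕ) :
    (Finset.univ.filter (fun u : Fin n → Fin 2 => wt u = k)).card = n.choose k := by
  have h : (Finset.powersetCard k (Finset.univ : Finset (Fin n))).card = n.choose k := by simp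
  rw [← h]
  refine Finset.card_bij' (fun u _ => Finset.univ.filter (fun i => u i = 1))
    (fun s _ => fun i => if i ∈ s then 1 else 0) ?_ ?_ ?_ ?_
  · intro a ha
    have ha' := (Finset.mem_filter.1 ha).2
    exact Finset.mem_powersetCard.2 ⟨Finset.subset_univ _, ha'⟩
  · intro s hs
    refine Finset.mem_filter.2 ⟨Finset.mem_univ _, ?_⟩
    simpa [wt, Finset.mem_powersetCard] using hs
  · intro a ha
    funext i
    have : a i = 0 ∨ a i = 1 := by
      generalize a i = z
      fin_cases z <;> simp
    rcases this with h | h <;> simp [h]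
  · intro s hs
    ext i
    simp

lemma symProj_apply (N : ℕ) (x y : Fin N → Fin 2) :
    symProj N x y = if wt x = wt y then ((N.choose (wt x) : ℕ) : ℂ)⁻¹ else 0 := by
  have key : ∀ k, dicke N k x * star (dicke N k y) =
      if wt x = k then (if wt y = k then ((N.choose k : ℕ) : ℂ)⁻¹ else 0) else 0 := by
    intro k
    unfold dicke
    change (if wt x = k then _ else _) * star (if wt y = k then _ else _) = _
    split_ifs
    · have h : (Real.sqrt (N.choose k))⁻¹ * (Real.sqrt (N.choose k))⁻¹
          = ((N.choose k : ℕ) : ℝ)⁻¹ := by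
        rw [← mul_inv, Real.mul_self_sqrt (by positivity)]
      have h2 := congrArg (fun r : ℝ => (r : ℂ)) h
      simp only [Complex.ofReal_mul] at h2
      rw [Complex.star_def, Complex.conj_ofReal, h2]
      simp
    all_goals simp
  unfold symProj
  simp only [key]
  rw [Finset.sum_ite_eq]
  have : wt x ∈ Finset.range (N+1) := by
    have := wt_le x
    simp; omega
  simp only [this, if_true, eq_comm]

lemma pt_apply (n : ℕ) (s t : Fin 2) (u w : Fin n → Fin 2) :
    pt {(0 : Fin (n+1))} (symProj (n+1)) (Fin.cons s u) (Fin.cons t w) =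
      if (t : ℕ) + wt u = s + wt w then (((n+1).choose (t + wt u) : ℕ) : ℂ)⁻¹ else 0 := by
  unfold pt
  have h : ∀ (s t : Fin 2) (u w : Fin n → Fin 2), (fun i => if i ∈ ({(0 : Fin (n+1))} : Finset _) then
      (Fin.cons t w : Fin (n+1) → Fin 2) i else (Fin.cons s u : Fin (n+1) → Fin 2) i)
      = (Fin.cons t u : Fin (n+1) → Fin 2) := by
    intro s t u w
    funext i
    refine Fin.cases ?_ (fun j => ?_) i <;> simp
  rw [h, h, symProj_apply, wt_cons, wt_cons]

lemma pt_herm (n : ℕ) : (pt {(0 : Fin (n+1))} (symProj (n+1))).IsHermitian := by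
  ext x y
  rw [Matrix.conjTranspose_apply]
  rw [← Fin.cons_self_tail x, ← Fin.cons_self_tail y, pt_apply, pt_apply]
  by_cases h : ((x 0 : Fin 2) : ℕ) + wt (Fin.tail y) = y 0 + wt (Fin.tail x)
  · rw [if_pos h, if_pos h.symm, h]
    simp
  · rw [if_neg h, if_neg (fun h' => h h'.symm)]
    simp

/-- Partial sums over a weight class. -/
def wsum {n : ℕ} (v : (Fin (n+1) → Fin 2) → ℂ) (t : Fin 2) (k : ℕ) : ℂ :=
  ∑ w : Fin n → Fin 2, if wt w = k then v (Fin.cons t w) else 0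

lemma mulVec_cons (n : ℕ) (v : (Fin (n+1) → Fin 2) → ℂ) (s : Fin 2) (u : Fin n → Fin 2) :
    ((pt {(0 : Fin (n+1))} (symProj (n+1))).mulVec v) (Fin.cons s u) =
      (∑ w : Fin n → Fin 2, if wt u = s + wt w then
        (((n+1).choose (wt u) : ℕ) : ℂ)⁻¹ * v (Fin.cons 0 w) else 0) +
      (∑ w : Fin n → Fin 2, if 1 + wt u = s + wt w then
        (((n+1).choose (1 + wt u) : ℕ) : ℂ)⁻¹ * v (Fin.cons 1 w) else 0) := by
  unfold Matrix.mulVec dotProduct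
  rw [← (Fin.consEquiv (fun _ : Fin (n+1) => Fin 2)).sum_comp, Fintype.sum_prod_type,
    Fin.sum_univ_two]
  simp only [Fin.consEquiv, Equiv.coe_fn_mk, pt_apply, ite_mul, zero_mul]
  simp

lemma wsum_eq {n : ℕ} (v : (Fin (n+1) → Fin 2) → ℂ) (t : Fin 2) (k : ℕ) (l c : ℂ)
    (h : ∀ u : Fin n → Fin 2, wt u = k → l * v (Fin.cons t u) = c) :
    l * wsum v t k = (n.choose k : ℕ) * c := by
  unfold wsum
  rw [Finset.mul_sum, ← card_wt, ← nsmul_eq_mul, ← Finset.sum_const, Finset.sum_filter]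
  refine Finset.sum_congr rfl (fun u _ => ?_)
  split_ifs with hu
  · exact h u hu
  · simp

lemma eig_main (n : ℕ) (v : (Fin (n+1) → Fin 2) → ℂ) (l : ℂ)
    (hv : (pt {(0 : Fin (n+1))} (symProj (n+1))).mulVec v = l • v) (hv0 : v ≠ 0) :
    l = 0 ∨ l * (n+1) = 1 ∨ l * (n+1) = n + 2 := by
  by_contra! hc
  obtain ⟨hl0, hl1, hl2⟩ := hc
  have hE : ∀ s u, l * v (Fin.cons s u) = _ := fun s u =>
    (congrFun hv (Fin.cons s u)).symm.trans (mulVec_cons n v s u)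
  have hn : ((n : ℂ) + 1) ≠ 0 := by exact_mod_cast Nat.succ_ne_zero n
  have h0 : ∀ u m, wt u = m → l * v (Fin.cons 0 u) =
      wsum v 0 m * (((n+1).choose m : ℕ) : ℂ)⁻¹ +
      wsum v 1 (m+1) * (((n+1).choose (m+1) : ℕ) : ℂ)⁻¹ := by
    rintro u m rfl
    rw [hE]
    unfold wsum
    rw [Finset.sum_mul, Finset.sum_mul]
    congr 1 <;> refine Finset.sum_congr rfl (fun w _ => ?_)
    · have : (wt u = ((0 : Fin 2) : ℕ) + wt w) ↔ wt w = wt u := by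
        simp; omega
      simp only [this, ite_mul, zero_mul]
      rw [mul_comm]
    · have : (1 + wt u = ((0 : Fin 2) : ℕ) + wt w) ↔ wt w = wt u + 1 := by
        simp; omega
      simp only [this, ite_mul, zero_mul]
      rw [mul_comm, add_comm 1]
  have h1 : ∀ u m, wt u = m + 1 → l * v (Fin.cons 1 u) =
      wsum v 0 m * (((n+1).choose (m+1) : ℕ) : ℂ)⁻¹ +
      wsum v 1 (m+1) * (((n+1).choose (m+2) : ℕ) : ℂ)⁻¹ := by
    rintro u m h
    rw [hE, h]
    unfold wsum
    rw [Finset.sum_mul, Finset.sum_mul]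
    congr 1 <;> refine Finset.sum_congr rfl (fun w _ => ?_)
    · have : (m + 1 = ((1 : Fin 2) : ℕ) + wt w) ↔ wt w = m := by
        simp; omega
      simp only [this, ite_mul, zero_mul]
      rw [mul_comm]
    · have : (1 + (m + 1) = ((1 : Fin 2) : ℕ) + wt w) ↔ wt w = m + 1 := by
        simp; omega
      simp only [this, ite_mul, zero_mul]
      rw [mul_comm, show 1 + (m+1) = m + 2 by omega]
  have h2 : ∀ u, wt u = 0 → l * v (Fin.cons 1 u) = wsum v 1 0 * ((n : ℂ) + 1)⁻¹ := by
    rintro u h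
    rw [hE, h]
    unfold wsum
    rw [Finset.sum_mul, Finset.sum_eq_zero, zero_add]
    · refine Finset.sum_congr rfl (fun w _ => ?_)
      have : (1 + 0 = ((1 : Fin 2) : ℕ) + wt w) ↔ wt w = 0 := by
        simp
      simp only [this, ite_mul, zero_mul]
      rw [mul_comm]
      simp
    · intro w _
      rw [if_neg]
      simp only [Fin.val_one]
      omega
  -- the sums vanish
  have z2 : wsum v 1 0 = 0 := by
    have := wsum_eq v 1 0 l _ h2
    simp only [Nat.choose_zero_right, Nat.cast_one, one_mul] at this
    by_contra hne
    apply hl1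
    field_simp at this
    exact this
  have ztop : wsum v 1 (n+1) = 0 := by
    unfold wsum
    refine Finset.sum_eq_zero (fun w _ => if_neg ?_)
    have := wt_le w
    omega
  have zn : wsum v 0 n = 0 := by
    have := wsum_eq v 0 n l _ (fun u hu => h0 u n hu)
    rw [ztop] at this
    simp only [Nat.choose_self, Nat.cast_one, one_mul, zero_mul, add_zero,
      Nat.choose_succ_self_right] at this
    by_contra hne
    apply hl1
    push_cast at this
    field_simp at this
    exact this
  have zm : ∀ m, m < n → wsum v 0 m = 0 ∧ wsum v 1 (m+1) = 0 := by
    intro m hm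
    have e0 := wsum_eq v 0 m l _ (fun u hu => h0 u m hu)
    have e1 := wsum_eq v 1 (m+1) l _ (fun u hu => h1 u m hu)
    generalize wsum v 0 m = F at *
    generalize wsum v 1 (m+1) = G at *
    have c0 : (((n+1).choose m : ℕ) : ℂ) ≠ 0 := by
      exact_mod_cast (Nat.choose_pos (by omega)).ne'
    have c1 : (((n+1).choose (m+1) : ℕ) : ℂ) ≠ 0 := by
      exact_mod_cast (Nat.choose_pos (by omega)).ne'
    have c2 : (((n+1).choose (m+2) : ℕ) : ℂ) ≠ 0 := by
      exact_mod_cast (Nat.choose_pos (by omega)).ne'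
    obtain ⟨d, rfl⟩ : ∃ d, n = m + 1 + d := ⟨n - (m+1), by omega⟩
    have r0 : (((m+1+d).choose m : ℕ) : ℂ) * ((m+1+d+1 : ℕ) : ℂ)
        = (((m+1+d+1).choose m : ℕ) : ℂ) * ((d + 2 : ℕ) : ℂ) := by
      have := Nat.choose_mul_succ_eq (m+1+d) m
      rw [show m + 1 + d + 1 - m = d + 2 by omega] at this
      exact_mod_cast this
    have r0' : (((m+1+d).choose m : ℕ) : ℂ) * ((m+1+d+1 : ℕ) : ℂ)
        = (((m+1+d+1).choose (m+1) : ℕ) : ℂ) * ((m + 1 : ℕ) : ℂ) := by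
      have := Nat.add_one_mul_choose_eq (m+1+d) m
      rw [mul_comm]
      exact_mod_cast this
    have r1 : (((m+1+d).choose (m+1) : ℕ) : ℂ) * ((m+1+d+1 : ℕ) : ℂ)
        = (((m+1+d+1).choose (m+1) : ℕ) : ℂ) * ((d + 1 : ℕ) : ℂ) := by
      have := Nat.choose_mul_succ_eq (m+1+d) (m+1)
      rw [show m + 1 + d + 1 - (m+1) = d + 1 by omega] at this
      exact_mod_cast this
    have r1' : (((m+1+d).choose (m+1) : ℕ) : ℂ) * ((m+1+d+1 : ℕ) : ℂ)
        = (((m+1+d+1).choose (m+2) : ℕ) : ℂ) * ((m + 2 : ℕ) : ℂ) := by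
      have := Nat.add_one_mul_choose_eq (m+1+d) (m+1)
      rw [mul_comm]
      exact_mod_cast this
    have E0 : l * (m+1+d+1) * F = (d+2) * F + (m+1) * G := by
      calc l * (m+1+d+1) * F = (l * F) * ((m+1+d+1 : ℕ) : ℂ) := by push_cast; ring
        _ = F * (((((m+1+d).choose m : ℕ) : ℂ) * ((m+1+d+1 : ℕ) : ℂ))
              * (((m+1+d+1).choose m : ℕ) : ℂ)⁻¹) +
            G * (((((m+1+d).choose m : ℕ) : ℂ) * ((m+1+d+1 : ℕ) : ℂ))
              * (((m+1+d+1).choose (m+1) : ℕ) : ℂ)⁻¹) := by rw [e0]; ring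
        _ = _ := by
          nth_rewrite 1 [r0]
          rw [r0', mul_comm _ ((d + 2 : ℕ) : ℂ), mul_comm _ ((m + 1 : ℕ) : ℂ),
            mul_inv_cancel_right₀ c0, mul_inv_cancel_right₀ c1]
          push_cast; ring
    have E1 : l * (m+1+d+1) * G = (d+1) * F + (m+2) * G := by
      calc l * (m+1+d+1) * G = (l * G) * ((m+1+d+1 : ℕ) : ℂ) := by push_cast; ring
        _ = F * (((((m+1+d).choose (m+1) : ℕ) : ℂ) * ((m+1+d+1 : ℕ) : ℂ))
              * (((m+1+d+1).choose (m+1) : ℕ) : ℂ)⁻¹) +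
            G * (((((m+1+d).choose (m+1) : ℕ) : ℂ) * ((m+1+d+1 : ℕ) : ℂ))
              * (((m+1+d+1).choose (m+2) : ℕ) : ℂ)⁻¹) := by rw [e1]; ring
        _ = _ := by
          nth_rewrite 1 [r1]
          rw [r1', mul_comm _ ((d + 1 : ℕ) : ℂ), mul_comm _ ((m + 2 : ℕ) : ℂ),
            mul_inv_cancel_right₀ c1, mul_inv_cancel_right₀ c2]
          push_cast; ring
    push_cast at hl1 hl2 hn
    have s1 : F - G = 0 := by
      have : (l * (m+1+d+1) - 1) * (F - G) = 0 := by linear_combination E0 - E1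
      exact (mul_eq_zero.1 this).resolve_left (sub_ne_zero.2 hl1)
    have s2 : (d+1) * F + (m+1) * G = 0 := by
      have : (l * (m+1+d+1) - (m+1+d+2)) * ((d+1) * F + (m+1) * G) = 0 := by
        linear_combination (d+1) * E0 + (m+1) * E1
      exact (mul_eq_zero.1 this).resolve_left (sub_ne_zero.2 hl2)
    have s3 : F = 0 := by
      have : ((m:ℂ)+1+d+1) * F = 0 := by linear_combination (m+1) * s1 + s2
      exact (mul_eq_zero.1 this).resolve_left hn
    exact ⟨s3, by linear_combination s3 - s1⟩
  have zA : ∀ m, m ≤ n → wsum v 0 m = 0 ∧ wsum v 1 (m+1) = 0 := by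
    intro m hm
    rcases hm.lt_or_eq with h | rfl
    · exact zm m h
    · exact ⟨zn, ztop⟩
  apply hv0
  funext x
  rw [← Fin.cons_self_tail x]
  generalize Fin.tail x = u
  have hs : x 0 = 0 ∨ x 0 = 1 := by
    generalize x 0 = z
    fin_cases z <;> simp
  refine (mul_eq_zero.1 (?_ : l * v _ = 0)).resolve_left hl0
  rcases hs with h | h <;> rw [h]
  · obtain ⟨a, b⟩ := zA (wt u) (wt_le u)
    rw [h0 u _ rfl, a, b]; simp
  · rcases hw : wt u with _ | m
    · rw [h2 u hw, z2]; simp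
    · obtain ⟨a, b⟩ := zA m (by have := wt_le u; omega)
      rw [h1 u m hw, a, b]; simp

lemma eig_exists (n : ℕ) :
    (pt {(0 : Fin (n+1))} (symProj (n+1))).mulVec (Pi.single (Fin.cons 1 0) 1) =
      ((n:ℂ)+1)⁻¹ • (Pi.single (Fin.cons 1 0) 1) := by
  rw [Matrix.mulVec_single_one]
  funext x
  have w0 : wt (0 : Fin n → Fin 2) = 0 := by simp [wt]
  rw [← Fin.cons_self_tail x]
  generalize Fin.tail x = u
  generalize x 0 = s
  rw [Matrix.col_apply]
  rw [pt_apply, w0]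
  by_cases h : s = 1 ∧ u = 0
  · obtain ⟨rfl, rfl⟩ := h
    simp [w0]
  · have hne : (Fin.cons s u : Fin (n+1) → Fin 2) ≠ Fin.cons 1 0 := by
      intro h'
      exact h (Fin.cons_inj.1 h')
    rw [if_neg, Pi.smul_apply, Pi.single_eq_of_ne hne, smul_zero]
    intro h'
    apply h
    have a := s.isLt
    have hs1 : (s : ℕ) = 1 := by simp at h'; omega
    have hw : wt u = 0 := by simp at h'; omega
    refine ⟨Fin.ext hs1, ?_⟩
    funext i
    simp only [wt, Finset.card_eq_zero, Finset.filter_eq_empty_iff] at hw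
    have := hw (Finset.mem_univ i)
    revert this
    simp only [Pi.zero_apply]
    generalize u i = z
    fin_cases z <;> simp

/-- The partial transpose of the symmetric projector of `N` qubits is PSD and
its smallest nonzero eigenvalue is `1/N`. -/
theorem stmt6 (N : ℕ) (hN : 2 ≤ N) :
    ∃ h : (pt {⟨0, by omega⟩} (symProj N)).PosSemidef,
      (∃ j, h.1.eigenvalues j = 1 / (N : ℝ)) ∧
      ∀ j, h.1.eigenvalues j = 0 ∨ 1 / (N : ℝ) ≤ h.1.eigenvalues j := by
  obtain ⟨n, rfl⟩ : ∃ n, N = n + 1 := ⟨N - 1, by omega⟩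
  change ∃ h : (pt {(0 : Fin (n+1))} (symProj (n+1))).PosSemidef, _
  have hH := pt_herm n
  have hpos : (0:ℝ) < n + 1 := by positivity
  have hall : ∀ j, hH.eigenvalues j = 0 ∨ 1 / ((n+1 : ℕ) : ℝ) ≤ hH.eigenvalues j := by
    intro j
    have h1 := hH.mulVec_eigenvectorBasis j
    have h2 := eig_main n (hH.eigenvectorBasis j).ofLp (hH.eigenvalues j : ℂ)
      (by rw [h1]; funext x; simp)
      (by
        intro h
        apply hH.eigenvectorBasis.orthonormal.ne_zero j
        ext x
        exact congrFun h x)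
    push_cast
    rw [div_le_iff₀ hpos]
    rcases h2 with h | h | h
    · left; exact_mod_cast h
    · right
      have : hH.eigenvalues j * (n+1) = 1 := by exact_mod_cast h
      exact this.ge
    · right
      have : hH.eigenvalues j * (n+1) = n + 2 := by exact_mod_cast h
      rw [this]; linarith [(Nat.cast_nonneg n : (0:ℝ) ≤ n)]
  refine ⟨hH.posSemidef_iff_eigenvalues_nonneg.2 ?_, ?_, hall⟩
  · intro j
    rcases hall j with h | h
    · exact h.ge
    · exact le_trans (by positivity) h
  · have hs : (1 / ((n+1 : ℕ) : ℝ)) ∈ Set.range hH.eigenvalues := by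
      rw [← hH.spectrum_real_eq_range_eigenvalues, ← spectrum.algebraMap_mem_iff ℂ,
        ← Matrix.spectrum_toLin', ← Module.End.hasEigenvalue_iff_mem_spectrum]
      refine Module.End.hasEigenvalue_of_hasEigenvector (x := Pi.single (Fin.cons 1 0) 1)
        ⟨Module.End.mem_eigenspace_iff.2 ?_, ?_⟩
      · rw [Matrix.toLin'_apply, eig_exists]
        simp
      · simp
    exact hs
end
end

section
/- Let N ≥ 2, let ρ_DS = Σ_{k=0}^N p_k |S_k^N⟩⟨S_k^N| be a diagonal symmetric N-qubit state (p_k ≥ 0, Σ_k p_k = 1), and let α be a real number such that both Hankel matrices M_0(q) and M_1(q) are positive semidefinite, where q_k = 1 + α·p_k for 0 ≤ k ≤ N. Then σ = 𝟙_S + α·ρ_DS is fully separable. -/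
open scoped ComplexOrder

noncomputable section

/-! ### Convex hulls of compact sets in finite dimension -/

theorem isCompact_convexHull_aux {n : ℕ} {s : Set (Fin n → ℝ)} (hs : IsCompact s) :
    IsCompact (convexHull ℝ s) := by
  rcases s.eq_empty_or_nonempty with rfl | ⟨z0, hz0⟩
  · simp
  let F : (Fin (n + 1) → ℝ) × (Fin (n + 1) → Fin n → ℝ) → (Fin n → ℝ) :=
    fun q => ∑ i, q.1 i • q.2 i
  have hF : Continuous F := by fun_prop
  have hc : IsCompact ((stdSimplex ℝ (Fin (n + 1))) ×ˢ (Set.univ.pi fun _ : Fin (n + 1) => s)) :=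
    (isCompact_stdSimplex ℝ _).prod (isCompact_univ_pi fun _ => hs)
  have : convexHull ℝ s =
      F '' ((stdSimplex ℝ (Fin (n + 1))) ×ˢ (Set.univ.pi fun _ : Fin (n + 1) => s)) := by
    apply Set.Subset.antisymm
    · intro x hx
      obtain ⟨ι, _, z, w, hz, hind, hw, hw1, hx⟩ := eq_pos_convex_span_of_mem_convexHull hx
      have hcard : Fintype.card ι ≤ Fintype.card (Fin (n + 1)) := by
        have h1 := hind.card_le_finrank_succ
        have h2 := Submodule.finrank_le (vectorSpan ℝ (Set.range z))
        simp at h2 ⊢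
        omega
      obtain ⟨e⟩ := Function.Embedding.nonempty_of_card_le hcard
      have he := e.injective
      refine ⟨(Function.extend e w 0, Function.extend e z fun _ => z0), ⟨⟨?_, ?_⟩, ?_⟩, ?_⟩
      · intro j
        by_cases hj : ∃ i, e i = j
        · obtain ⟨i, rfl⟩ := hj
          simpa [he.extend_apply] using (hw i).le
        · simp [Function.extend_apply' _ _ _ hj]
      · rw [← hw1]
        symm
        refine Fintype.sum_of_injective e he _ _ ?_ ?_
        · intro j hj
          exact Function.extend_apply' _ _ _ hj
        · intro i
          simp [he.extend_apply]
      · intro j _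
        by_cases hj : ∃ i, e i = j
        · obtain ⟨i, rfl⟩ := hj
          simpa [he.extend_apply] using hz ⟨i, rfl⟩
        · simpa [Function.extend_apply' _ _ _ hj] using hz0
      · rw [← hx]
        symm
        refine Fintype.sum_of_injective e he _ _ ?_ ?_
        · intro j hj
          have h0 : Function.extend e w 0 j = 0 := Function.extend_apply' _ _ _ hj
          simp [h0]
        · intro i
          simp [he.extend_apply]
    · rintro _ ⟨⟨w, z⟩, ⟨⟨hw, hw1⟩, hz⟩, rfl⟩
      exact (convex_convexHull ℝ s).sum_mem (fun i _ => hw i) hw1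
        fun i _ => subset_convexHull ℝ s (hz i trivial)
  rw [this]
  exact hc.image hF

/-! ### Positive polynomials on the half-line -/

open Polynomial in
/-- Cone generated by `g²` and `X h²` with total degree at most `n`. -/
def posCone (n : ℕ) : AddSubmonoid (Polynomial ℝ) :=
  AddSubmonoid.closure
    ({P | ∃ g : ℝ[X], 2 * g.natDegree ≤ n ∧ P = g * g} ∪
     {P | ∃ g : ℝ[X], 2 * g.natDegree + 1 ≤ n ∧ P = X * (g * g)})

open Polynomial Pointwise in
theorem posCone_mul {m n : ℕ} {P R : ℝ[X]} (hP : P ∈ posCone m) (hR : R ∈ posCone n) :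
    P * R ∈ posCone (m + n) := by
  have h : P * R ∈ posCone m * posCone n := AddSubmonoid.mul_mem_mul hP hR
  unfold posCone at h
  rw [AddSubmonoid.closure_mul_closure] at h
  refine AddSubmonoid.closure_mono ?_ h
  rintro _ ⟨p, hp, q, hq, rfl⟩
  rcases hp with ⟨g, hg, rfl⟩ | ⟨g, hg, rfl⟩ <;> rcases hq with ⟨k, hk, rfl⟩ | ⟨k, hk, rfl⟩
  · refine Or.inl ⟨g * k, ?_, by ring⟩
    have := natDegree_mul_le (p := g) (q := k)
    omega
  · refine Or.inr ⟨g * k, ?_, by ring⟩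
    have := natDegree_mul_le (p := g) (q := k)
    omega
  · refine Or.inr ⟨g * k, ?_, by ring⟩
    have := natDegree_mul_le (p := g) (q := k)
    omega
  · refine Or.inl ⟨X * (g * k), ?_, by ring⟩
    have := natDegree_mul_le (p := g) (q := k)
    have h2 := natDegree_mul_le (p := X) (q := g * k)
    rw [natDegree_X] at h2
    omega

open Polynomial in
theorem posCone_mono {m n : ℕ} (h : m ≤ n) : posCone m ≤ posCone n := by
  refine AddSubmonoid.closure_mono ?_
  rintro _ (⟨g, hg, rfl⟩ | ⟨g, hg, rfl⟩)
  · exact Or.inl ⟨g, by omega, rfl⟩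
  · exact Or.inr ⟨g, by omega, rfl⟩

open Polynomial in
theorem posCone_C {c : ℝ} (hc : 0 ≤ c) (n : ℕ) : C c ∈ posCone n := by
  refine AddSubmonoid.subset_closure (Or.inl ⟨C (√c), by simp, ?_⟩)
  rw [← C_mul, Real.mul_self_sqrt hc]

open Polynomial in
theorem mem_posCone_of_pos (n : ℕ) : ∀ P : ℝ[X], P.natDegree = n →
    (∀ t : ℝ, 0 ≤ t → 0 < P.eval t) → P ∈ posCone n := by
  induction n using Nat.strong_induction_on with
  | _ n ih =>
    intro P hn hpos
    rcases Nat.eq_zero_or_pos n with h0 | h0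
    · rw [h0] at hn
      rw [eq_C_of_natDegree_eq_zero hn]
      have := hpos 0 le_rfl
      rw [← coeff_zero_eq_eval_zero] at this
      exact posCone_C this.le _
    · have hP0 : P ≠ 0 := by
        rintro rfl
        simp at hn
        omega
      obtain ⟨z, hz⟩ : ∃ z : ℂ, aeval z P = 0 := by
        have : 0 < (P.map (algebraMap ℝ ℂ)).degree := by
          rw [degree_map, ← natDegree_pos_iff_degree_pos]
          omega
        obtain ⟨z, hz⟩ := Complex.exists_root this
        exact ⟨z, by rwa [IsRoot, eval_map_algebraMap] at hz⟩
      by_cases him : z.im = 0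
      · have hzr : z = (z.re : ℂ) := Complex.ext rfl (by simpa using him)
        have hr : P.IsRoot z.re := by
          rw [hzr] at hz
          have h2 : aeval ((algebraMap ℝ ℂ) z.re) P = 0 := hz
          rw [aeval_algebraMap_apply] at h2
          simpa using h2
        have hneg : z.re < 0 := by
          by_contra hcon
          have := hpos z.re (not_lt.mp hcon)
          rw [hr] at this
          exact lt_irrefl _ this
        obtain ⟨Q, hQ⟩ := dvd_iff_isRoot.mpr hr
        have hQ0 : Q ≠ 0 := by
          rintro rfl
          simp at hQ
          exact hP0 hQ
        have hdeg : n = 1 + Q.natDegree := by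
          rw [← hn, hQ, natDegree_mul (X_sub_C_ne_zero _) hQ0, natDegree_X_sub_C]
        have hQm := ih Q.natDegree (by omega) Q rfl (by
          intro t ht
          have := hpos t ht
          rw [hQ, eval_mul] at this
          refine pos_of_mul_pos_right this ?_
          simp
          linarith)
        rw [hQ, hdeg]
        refine posCone_mul ?_ hQm
        have : X - C z.re = X * (1 * 1) + C (-z.re) := by simp [sub_eq_add_neg]
        rw [this]
        refine add_mem ?_ (posCone_C (by linarith) _)
        exact AddSubmonoid.subset_closure (Or.inr ⟨1, by simp, rfl⟩)
      · obtain ⟨Q, hQ⟩ := P.quadratic_dvd_of_aeval_eq_zero_im_ne_zero hz him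
        have hquad : (X ^ 2 - C (2 * z.re) * X + C (‖z‖ ^ 2) : ℝ[X])
            = (X - C z.re) * (X - C z.re) + C (z.im ^ 2) := by
          rw [← Complex.normSq_eq_norm_sq, Complex.normSq_apply]
          simp only [map_add, map_mul, map_pow, map_ofNat]
          ring
        rw [hquad] at hQ
        have hQ0 : Q ≠ 0 := by
          rintro rfl
          simp at hQ
          exact hP0 hQ
        have hd2 : ((X - C z.re) * (X - C z.re) + C (z.im ^ 2) : ℝ[X]).natDegree = 2 := by
          rw [natDegree_add_C, natDegree_mul (X_sub_C_ne_zero _) (X_sub_C_ne_zero _),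
            natDegree_X_sub_C]
        have hdeg : n = 2 + Q.natDegree := by
          rw [← hn, hQ, natDegree_mul _ hQ0, hd2]
          intro h
          rw [h] at hd2
          simp at hd2
        have hQm := ih Q.natDegree (by omega) Q rfl (by
          intro t ht
          have := hpos t ht
          rw [hQ, eval_mul] at this
          refine pos_of_mul_pos_right this ?_
          simp
          nlinarith [mul_self_nonneg (t - z.re), sq_nonneg z.im])
        rw [hQ, hdeg]
        refine posCone_mul (add_mem ?_ (posCone_C (sq_nonneg _) _)) hQm
        exact AddSubmonoid.subset_closure (Or.inl ⟨X - C z.re, by simp, rfl⟩)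

/-! ### The moment functional -/

open Polynomial in
/-- The moment functional `X ^ k ↦ m k`. -/
def momL (m : ℕ → ℝ) : ℝ[X] →ₗ[ℝ] ℝ := Polynomial.lsum fun k => m k • LinearMap.id

open Polynomial in
theorem momL_monomial (m : ℕ → ℝ) (k : ℕ) (c : ℝ) : momL m (monomial k c) = c * m k := by
  simp [momL, Polynomial.lsum_apply, mul_comm]

open Polynomial in
theorem momL_sq (m : ℕ → ℝ) (l d : ℕ) (g : ℝ[X]) (hg : g.natDegree ≤ d) :
    momL m (X ^ l * (g * g)) =
      ∑ i : Fin (d + 1), ∑ j : Fin (d + 1), g.coeff i * (m (i + j + l) * g.coeff j) := by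
  have h : g = ∑ i : Fin (d + 1), monomial (i : ℕ) (g.coeff i) := by
    rw [Fin.sum_univ_eq_sum_range (fun i => monomial i (g.coeff i))]
    exact g.as_sum_range' _ (by omega)
  have h2 : X ^ l * (g * g) = ∑ i : Fin (d + 1), ∑ j : Fin (d + 1),
      monomial ((i : ℕ) + j + l) (g.coeff i * g.coeff j) := by
    conv_lhs => rw [h]
    rw [Finset.sum_mul_sum, Finset.mul_sum]
    refine Finset.sum_congr rfl fun i _ => ?_
    rw [Finset.mul_sum]
    refine Finset.sum_congr rfl fun j _ => ?_
    rw [monomial_mul_monomial, X_pow_mul_monomial]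
  rw [h2, map_sum]
  refine Finset.sum_congr rfl fun i _ => ?_
  rw [map_sum]
  refine Finset.sum_congr rfl fun j _ => ?_
  rw [momL_monomial]
  ring

open Polynomial in
theorem momL_sq_nonneg (N l : ℕ) (q : ℕ → ℝ) (h : (hankel N l q).PosSemidef) (g : ℝ[X])
    (hg : g.natDegree ≤ (N - l) / 2) :
    0 ≤ momL (fun k => q k / N.choose k) (X ^ l * (g * g)) := by
  rw [momL_sq _ l _ g hg]
  have := h.dotProduct_mulVec_nonneg (fun i => g.coeff i)
  simpa [dotProduct, Matrix.mulVec, hankel, Finset.mul_sum] using this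

open Polynomial in
theorem momL_nonneg (N : ℕ) (q : ℕ → ℝ) (h0 : (hankel N 0 q).PosSemidef)
    (h1 : (hankel N 1 q).PosSemidef) (P : ℝ[X]) (hP : P ∈ posCone N) :
    0 ≤ momL (fun k => q k / N.choose k) P := by
  induction hP using AddSubmonoid.closure_induction with
  | mem P hP =>
    rcases hP with ⟨g, hg, rfl⟩ | ⟨g, hg, rfl⟩
    · simpa using momL_sq_nonneg N 0 q h0 g (by omega)
    · simpa using momL_sq_nonneg N 1 q h1 g (by omega)
  | zero => simp
  | add x y _ _ hx hy =>
    rw [map_add]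
    exact add_nonneg hx hy

/-! ### The moment problem -/

/-- The moment curve, homogenised. -/
def momCurve (N : ℕ) (b : ℝ) : Fin (N + 1) → ℝ := fun k => (1 - b) ^ (N - (k : ℕ)) * b ^ (k : ℕ)

theorem sum_choose_pow (N : ℕ) (t : ℝ) :
    (1 + t) ^ N = ∑ k : Fin (N + 1), t ^ (k : ℕ) * N.choose k := by
  rw [add_comm, add_pow, Fin.sum_univ_eq_sum_range (fun k => t ^ k * (N.choose k : ℝ))]
  simp

open Polynomial in
theorem moment_problem (N : ℕ) (q : ℕ → ℝ) (h0 : (hankel N 0 q).PosSemidef)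
    (h1 : (hankel N 1 q).PosSemidef) (s : ℝ) (hs : 0 < s)
    (hsum : ∑ k : Fin (N + 1), q k = s) :
    (fun k : Fin (N + 1) => s⁻¹ * (q k / N.choose k)) ∈
      convexHull ℝ (momCurve N '' Set.Icc 0 1) := by
  by_contra hcon
  have hcurve : Continuous (momCurve N) := by
    unfold momCurve
    fun_prop
  have hcl := (isCompact_convexHull_aux
    ((isCompact_Icc (a := (0 : ℝ)) (b := 1)).image hcurve)).isClosed
  obtain ⟨f, u, hfu, hf⟩ := geometric_hahn_banach_point_closed (convex_convexHull ℝ _) hcl hcon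
  obtain ⟨a, ha⟩ : ∃ a : Fin (N + 1) → ℝ, ∀ v, f v = ∑ k, v k * a k :=
    ⟨_, fun v => f.toLinearMap.pi_apply_eq_sum_univ v⟩
  set P : ℝ[X] := ∑ k : Fin (N + 1), monomial (k : ℕ) (a k - u * N.choose k) with hP
  have hdeg : P.natDegree ≤ N := by
    refine natDegree_sum_le_of_forall_le _ _ fun k _ => ?_
    exact (natDegree_monomial_le _).trans (by omega)
  have hpos : ∀ t : ℝ, 0 ≤ t → 0 < P.eval t := by
    intro t ht
    have h1t : 0 < 1 + t := by linarith
    have h := hf (momCurve N (t / (1 + t))) (subset_convexHull ℝ _ ⟨_, ⟨by positivity, by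
      rw [div_le_one h1t]
      linarith⟩, rfl⟩)
    have hc : ∀ k : Fin (N + 1), momCurve N (t / (1 + t)) k = t ^ (k : ℕ) / (1 + t) ^ N := by
      intro k
      have e1 : 1 - t / (1 + t) = 1 / (1 + t) := by
        field_simp
        ring
      have e2 : (1 + t) ^ N = (1 + t) ^ (N - (k : ℕ)) * (1 + t) ^ (k : ℕ) := by
        rw [← pow_add]
        congr 1
        omega
      rw [momCurve, e1, e2, div_pow, div_pow]
      field_simp
      simp
    rw [ha] at h
    simp only [hc] at h
    have h2 : u * (1 + t) ^ N < ∑ k : Fin (N + 1), t ^ (k : ℕ) * a k := by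
      have := mul_lt_mul_of_pos_right h (pow_pos h1t N)
      rw [Finset.sum_mul] at this
      refine this.trans_eq (Finset.sum_congr rfl fun k _ => ?_)
      field_simp
    rw [sum_choose_pow, Finset.mul_sum] at h2
    rw [hP, eval_finsetSum]
    simp only [eval_monomial]
    have h3 := sub_pos.mpr h2
    rw [← Finset.sum_sub_distrib] at h3
    refine h3.trans_eq (Finset.sum_congr rfl fun k _ => ?_)
    ring
  have hL := momL_nonneg N q h0 h1 P (posCone_mono hdeg (mem_posCone_of_pos _ P rfl hpos))
  rw [hP, map_sum] at hL
  simp only [momL_monomial] at hL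
  rw [ha] at hfu
  have h3 : ∑ k : Fin (N + 1), q k / N.choose k * a k < u * s := by
    have := mul_lt_mul_of_pos_right hfu hs
    rw [Finset.sum_mul] at this
    refine lt_of_eq_of_lt (Finset.sum_congr rfl fun k _ => ?_) this
    field_simp
  rw [← hsum, Finset.mul_sum] at h3
  have h4 := sub_neg.mpr h3
  rw [← Finset.sum_sub_distrib] at h4
  refine absurd hL (not_le.mpr (lt_of_eq_of_lt (Finset.sum_congr rfl fun k _ => ?_) h4))
  have : (N.choose k : ℝ) ≠ 0 := by
    have := Nat.choose_pos (Nat.lt_succ_iff.mp k.2)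
    positivity
  field_simp

/-! ### Full separability -/

/-- Hamming weight. -/
def hw {N : ℕ} (x : Fin N → Fin 2) : ℕ := (Finset.univ.filter (fun i => x i = 1)).card

theorem hw_le {N : ℕ} (x : Fin N → Fin 2) : hw x ≤ N := by
  simpa [hw] using Finset.card_filter_le (Finset.univ : Finset (Fin N)) (fun i => x i = 1)

theorem prod_hw {N : ℕ} (x : Fin N → Fin 2) (v : Fin 2 → ℂ) :
    ∏ i, v (x i) = v 0 ^ (N - hw x) * v 1 ^ hw x := by
  have h1 : ∀ i, v (x i) = if x i = 1 then v 1 else v 0 := by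
    intro i
    split_ifs with h
    · rw [h]
    · rw [show x i = 0 by omega]
  rw [Finset.prod_congr rfl fun i _ => h1 i, Finset.prod_ite, Finset.prod_const, Finset.prod_const]
  have h2 := Finset.card_filter_add_card_filter_not (s := (Finset.univ : Finset (Fin N)))
    (fun i => x i = 1)
  simp only [Finset.card_univ, Fintype.card_fin] at h2
  have h3 : (Finset.univ.filter (fun i => ¬ x i = 1)).card = N - hw x := by
    unfold hw
    omega
  rw [h3, mul_comm]
  rfl

theorem fullySep_add {N : ℕ} {σ τ : Matrix (Fin N → Fin 2) (Fin N → Fin 2) ℂ}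
    (hσ : FullySep σ) (hτ : FullySep τ) : FullySep (σ + τ) := by
  obtain ⟨K, A, hA, h⟩ := hσ
  obtain ⟨L, B, hB, h'⟩ := hτ
  refine ⟨K + L, Fin.append A B, ?_, ?_⟩
  · intro k
    refine Fin.addCases (fun k i => ?_) (fun k i => ?_) k
    · simpa using hA k i
    · simpa using hB k i
  · intro x y
    rw [Fin.sum_univ_add]
    simp [h, h']

theorem fullySep_smul {N : ℕ} (hN : 0 < N) {σ : Matrix (Fin N → Fin 2) (Fin N → Fin 2) ℂ}
    (hσ : FullySep σ) {c : ℝ} (hc : 0 ≤ c) : FullySep ((c : ℂ) • σ) := by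
  obtain ⟨K, A, hA, h⟩ := hσ
  refine ⟨K, fun k i => ((c ^ ((N : ℝ)⁻¹) : ℝ) : ℂ) • A k i, ?_, ?_⟩
  · intro k i
    refine (hA k i).smul ?_
    exact_mod_cast Real.rpow_nonneg hc _
  · intro x y
    simp only [Matrix.smul_apply, h, smul_eq_mul, Finset.prod_mul_distrib, Finset.mul_sum,
      Finset.prod_const, Finset.card_univ, Fintype.card_fin]
    rw [← Complex.ofReal_pow, Real.rpow_inv_natCast_pow hc hN.ne']

/-- The diagonal symmetric matrix with moments `m`. -/
def diagMat (N : ℕ) (m : Fin (N + 1) → ℝ) : Matrix (Fin N → Fin 2) (Fin N → Fin 2) ℂ :=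
  fun x y => if hw x = hw y then (m ⟨hw x, Nat.lt_succ_of_le (hw_le x)⟩ : ℂ) else 0

theorem sum_phase {n a b : ℕ} (ha : a < n) (hb : b < n) {ζ : ℂ} (hζ : IsPrimitiveRoot ζ n) :
    ∑ l : Fin n, (ζ ^ (l : ℕ)) ^ a * (star (ζ ^ (l : ℕ))) ^ b = if a = b then (n : ℂ) else 0 := by
  have hn : n ≠ 0 := by omega
  have hnorm : ‖ζ‖ = 1 := hζ.norm'_eq_one hn
  have hz0 : ζ ≠ 0 := hζ.ne_zero hn
  have hstar : star ζ = ζ⁻¹ := (Complex.inv_eq_conj hnorm).symm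
  have hterm : ∀ l : ℕ, (ζ ^ l) ^ a * (star (ζ ^ l)) ^ b = (ζ ^ a * (ζ⁻¹) ^ b) ^ l := by
    intro l
    rw [star_pow, hstar, mul_pow, ← pow_mul, ← pow_mul, ← pow_mul, ← pow_mul, mul_comm l a,
      mul_comm l b]
  rw [Fin.sum_univ_eq_sum_range (fun l => (ζ ^ l) ^ a * (star (ζ ^ l)) ^ b)]
  simp only [hterm]
  split_ifs with hab
  · subst hab
    rw [← mul_pow, mul_inv_cancel₀ hz0]
    simp
  · have hne : ζ ^ a * (ζ⁻¹) ^ b ≠ 1 := by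
      intro h
      rw [inv_pow, mul_inv_eq_one₀ (pow_ne_zero _ hz0)] at h
      exact hab (hζ.pow_inj ha hb h)
    have h1 : (ζ ^ a * (ζ⁻¹) ^ b) ^ n = 1 := by
      rw [mul_pow, ← pow_mul, ← pow_mul, mul_comm a, mul_comm b, pow_mul, pow_mul, inv_pow,
        hζ.pow_eq_one]
      simp
    rw [geom_sum_eq hne, h1]
    simp

theorem fullySep_curve (N : ℕ) (hN : 0 < N) (b : ℝ) (hb : b ∈ Set.Icc (0 : ℝ) 1) :
    FullySep (diagMat N (momCurve N b)) := by
  obtain ⟨hb0, hb1⟩ := hb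
  have hζ := Complex.isPrimitiveRoot_exp (N + 1) (by omega)
  set ζ := Complex.exp (2 * Real.pi * Complex.I / ((N + 1 : ℕ) : ℂ)) with hζdef
  let v : ℕ → Fin 2 → ℂ := fun l => ![((√(1 - b) : ℝ) : ℂ), ((√b : ℝ) : ℂ) * ζ ^ l]
  have hsep : FullySep (((N + 1 : ℝ) : ℂ) • diagMat N (momCurve N b)) := by
    refine ⟨N + 1, fun l _ => Matrix.vecMulVec (v l) (star (v l)), ?_, ?_⟩
    · intro l _
      exact Matrix.posSemidef_vecMulVec_self_star _
    · intro x y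
      simp only [Matrix.vecMulVec_apply, Finset.prod_mul_distrib, prod_hw]
      have hterm : ∀ l : ℕ, v l 0 ^ (N - hw x) * v l 1 ^ hw x *
          ((star (v l)) 0 ^ (N - hw y) * (star (v l)) 1 ^ hw y) =
          (((√(1 - b) : ℝ) : ℂ) ^ (N - hw x) * ((√b : ℝ) : ℂ) ^ hw x *
          (((√(1 - b) : ℝ) : ℂ) ^ (N - hw y) * ((√b : ℝ) : ℂ) ^ hw y)) *
          ((ζ ^ l) ^ hw x * (star (ζ ^ l)) ^ hw y) := by
        intro l
        have e1 : (star (v l)) 0 = ((√(1 - b) : ℝ) : ℂ) := by simp [v]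
        have e2 : (star (v l)) 1 = ((√b : ℝ) : ℂ) * star (ζ ^ l) := by simp [v]
        have e3 : v l 0 = ((√(1 - b) : ℝ) : ℂ) := by simp [v]
        have e4 : v l 1 = ((√b : ℝ) : ℂ) * ζ ^ l := by simp [v]
        rw [e1, e2, e3, e4, mul_pow, mul_pow]
        ring
      rw [Finset.sum_congr rfl fun (l : Fin (N + 1)) _ => hterm l, ← Finset.mul_sum,
        sum_phase (Nat.lt_succ_of_le (hw_le x)) (Nat.lt_succ_of_le (hw_le y)) hζ]
      simp only [Matrix.smul_apply, diagMat, momCurve, smul_eq_mul]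
      split_ifs with h
      · rw [← h]
        have e5 : ((√(1 - b) : ℝ) : ℂ) * ((√(1 - b) : ℝ) : ℂ) = ((1 - b : ℝ) : ℂ) := by
          rw [← Complex.ofReal_mul, Real.mul_self_sqrt (by linarith)]
        have e6 : ((√b : ℝ) : ℂ) * ((√b : ℝ) : ℂ) = (b : ℂ) := by
          rw [← Complex.ofReal_mul, Real.mul_self_sqrt hb0]
        rw [mul_mul_mul_comm, ← mul_pow, ← mul_pow, e5, e6]
        push_cast
        ring
      · simp
  have h2 := fullySep_smul hN hsep (c := ((N : ℝ) + 1)⁻¹) (by positivity)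
  rw [smul_smul, ← Complex.ofReal_mul, inv_mul_cancel₀ (by positivity)] at h2
  simpa using h2

theorem diagMat_comb (N : ℕ) (m m' : Fin (N + 1) → ℝ) (a b : ℝ) :
    diagMat N (a • m + b • m') = (a : ℂ) • diagMat N m + (b : ℂ) • diagMat N m' := by
  ext x y
  simp only [diagMat, Matrix.add_apply, Matrix.smul_apply, Pi.add_apply, Pi.smul_apply,
    smul_eq_mul]
  split_ifs <;> simp

theorem fullySep_hull (N : ℕ) (hN : 0 < N) (m : Fin (N + 1) → ℝ)
    (hm : m ∈ convexHull ℝ (momCurve N '' Set.Icc 0 1)) : FullySep (diagMat N m) := by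
  have hconv : Convex ℝ {m : Fin (N + 1) → ℝ | FullySep (diagMat N m)} := by
    intro m hm m' hm' a b ha hb _
    change FullySep _
    rw [diagMat_comb]
    exact fullySep_add (fullySep_smul hN hm ha) (fullySep_smul hN hm' hb)
  refine convexHull_min ?_ hconv hm
  rintro _ ⟨b, hb, rfl⟩
  exact fullySep_curve N hN b hb

theorem hankel_nonneg (N : ℕ) (q : ℕ → ℝ) (h0 : (hankel N 0 q).PosSemidef)
    (h1 : (hankel N 1 q).PosSemidef) (k : ℕ) (hk : k ≤ N) : 0 ≤ q k := by
  have hch : (0 : ℝ) < N.choose k := by exact_mod_cast Nat.choose_pos hk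
  have key : 0 ≤ q k / N.choose k := by
    rcases Nat.even_or_odd' k with ⟨c, rfl | rfl⟩
    · have := h0.diag_nonneg (i := ⟨c, by omega⟩)
      simpa [hankel, two_mul] using this
    · have := h1.diag_nonneg (i := ⟨c, by omega⟩)
      simpa [hankel, two_mul] using this
  have := mul_nonneg key hch.le
  rwa [div_mul_cancel₀ _ hch.ne'] at this

theorem fullySep_zero (N : ℕ) :
    FullySep (0 : Matrix (Fin N → Fin 2) (Fin N → Fin 2) ℂ) :=
  ⟨0, fun k => k.elim0, fun k => k.elim0, by simp⟩

theorem fullySep_hankel (N : ℕ) (hN : 0 < N) (q : ℕ → ℝ) (h0 : (hankel N 0 q).PosSemidef)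
    (h1 : (hankel N 1 q).PosSemidef) :
    FullySep (diagMat N fun k => q k / N.choose k) := by
  have hq : ∀ k : Fin (N + 1), 0 ≤ q k := fun k => hankel_nonneg N q h0 h1 k (by omega)
  rcases (Finset.sum_nonneg fun (k : Fin (N + 1)) _ => hq k).eq_or_lt with hs | hs
  · have hz : ∀ k : Fin (N + 1), q k = 0 := fun k =>
      (Finset.sum_eq_zero_iff_of_nonneg fun k _ => hq k).mp hs.symm k (Finset.mem_univ k)
    have : (diagMat N fun k => q k / N.choose k) = 0 := by
      ext x y
      have hx : q (hw x) = 0 := hz ⟨hw x, Nat.lt_succ_of_le (hw_le x)⟩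
      simp [diagMat, hx]
    rw [this]
    exact fullySep_zero N
  · have h2 := fullySep_smul hN (fullySep_hull N hN _ (moment_problem N q h0 h1 _ hs rfl)) hs.le
    convert h2 using 1
    ext x y
    simp only [diagMat, Matrix.smul_apply, smul_eq_mul]
    split_ifs
    · rw [← Complex.ofReal_mul, mul_inv_cancel_left₀ hs.ne']
    · simp

theorem dicke_sum (N : ℕ) (q : ℕ → ℝ) (x y : Fin N → Fin 2) :
    ∑ k ∈ Finset.range (N + 1), (q k : ℂ) * dicke N k x * star (dicke N k y) =
      diagMat N (fun k => q k / N.choose k) x y := by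
  rw [Finset.sum_eq_single (hw x)]
  · simp only [dicke, diagMat]
    by_cases h : hw x = hw y
    · have hx : (Finset.univ.filter (fun i => x i = 1)).card = hw x := rfl
      have hy : (Finset.univ.filter (fun i => y i = 1)).card = hw x := h.symm
      rw [if_pos hx, if_pos hy, if_pos h]
      have hs : (√(N.choose (hw x) : ℝ))⁻¹ * (√(N.choose (hw x) : ℝ))⁻¹
          = ((N.choose (hw x) : ℝ))⁻¹ := by
        rw [← mul_inv, Real.mul_self_sqrt (by positivity)]
      rw [Complex.star_def, Complex.conj_ofReal, mul_assoc, ← Complex.ofReal_mul, hs,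
        ← Complex.ofReal_mul, div_eq_mul_inv]
    · have hy : ¬ (Finset.univ.filter (fun i => y i = 1)).card = hw x := fun e => h e.symm
      rw [if_neg hy, if_neg h]
      simp
  · intro k _ hk
    have : dicke N k x = 0 := if_neg fun e => hk e.symm
    simp [this]
  · intro h
    exact absurd (Finset.mem_range.mpr (Nat.lt_succ_of_le (hw_le x))) h

/-- If the Hankel matrices of `q_k = 1 + α p_k` are PSD, then `𝟙_S + α ρ_DS` is
fully separable. -/
theorem stmt8 (N : ℕ) (hN : 2 ≤ N) (p : ℕ → ℝ) (hp : ∀ k ≤ N, 0 ≤ p k)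
    (hsum : ∑ k ∈ Finset.range (N + 1), p k = 1) (α : ℝ)
    (h0 : (hankel N 0 (fun k => 1 + α * p k)).PosSemidef)
    (h1 : (hankel N 1 (fun k => 1 + α * p k)).PosSemidef) :
    FullySep (symProj N + (α : ℂ) • rhoDS N p) := by

  have h := fullySep_hankel N (by omega) _ h0 h1
  convert h using 1
  ext x y
  rw [← dicke_sum N (fun k => 1 + α * p k)]
  simp only [Matrix.add_apply, Matrix.smul_apply, symProj, rhoDS, smul_eq_mul, Finset.mul_sum]
  rw [← Finset.sum_add_distrib]
  refine Finset.sum_congr rfl fun k _ => ?_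
  push_cast
  ring
end
end

section
/- Let N ≥ 2, let ρ be a positive semidefinite N-qubit operator, and let α, β be real numbers with α ≥ max(−1, β/2 − 1) and β ≥ max(−1, α/2 − 1). Then σ = Tr(ρ)·𝟙 + α·ρ + β·ρ̃_A is biseparable across the 1:(N−1) bipartition at qubit 0. -/
open scoped ComplexOrder

noncomputable section

open Matrix Kronecker in
def sepCone (B : Type) : AddSubmonoid (Matrix (Fin 2 × B) (Fin 2 × B) ℂ) :=
  AddSubmonoid.closure {M | ∃ (P : Matrix (Fin 2) (Fin 2) ℂ) (Q : Matrix B B ℂ),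
    P.PosSemidef ∧ Q.PosSemidef ∧ M = P ⊗ₖ Q}

section
open Matrix Kronecker
variable {B : Type} [Fintype B] [DecidableEq B]

lemma sepCone_kron {P : Matrix (Fin 2) (Fin 2) ℂ} {Q : Matrix B B ℂ} (hP : P.PosSemidef)
    (hQ : Q.PosSemidef) : P ⊗ₖ Q ∈ sepCone B :=
  AddSubmonoid.subset_closure ⟨P, Q, hP, hQ, rfl⟩

lemma sepCone_smul {M : Matrix (Fin 2 × B) (Fin 2 × B) ℂ} (hM : M ∈ sepCone B) (r : ℝ)
    (hr : 0 ≤ r) : (r : ℂ) • M ∈ sepCone B := by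
  induction hM using AddSubmonoid.closure_induction with
  | mem x hx =>
    obtain ⟨P, Q, hP, hQ, rfl⟩ := hx
    rw [← smul_kronecker]
    exact sepCone_kron (hP.smul (by exact_mod_cast hr)) hQ
  | zero => rw [smul_zero]; exact zero_mem _
  | add x y _ _ hx hy => rw [smul_add]; exact add_mem hx hy

lemma sepCone_conj {M : Matrix (Fin 2 × B) (Fin 2 × B) ℂ} (hM : M ∈ sepCone B)
    (U : Matrix (Fin 2) (Fin 2) ℂ) :
    (U ⊗ₖ (1 : Matrix B B ℂ)) * M * (Uᴴ ⊗ₖ (1 : Matrix B B ℂ)) ∈ sepCone B := by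
  induction hM using AddSubmonoid.closure_induction with
  | mem x hx =>
    obtain ⟨P, Q, hP, hQ, rfl⟩ := hx
    rw [← mul_kronecker_mul, ← mul_kronecker_mul, one_mul, mul_one]
    exact sepCone_kron (hP.mul_mul_conjTranspose_same U) hQ
  | zero => simp
  | add x y _ _ hx hy => rw [mul_add, add_mul]; exact add_mem hx hy

/-- block with `u u* + v v*` on the diagonal and `u v*` off the diagonal -/
def blockM (u v : B → ℂ) : Matrix (Fin 2 × B) (Fin 2 × B) ℂ := fun p q =>
  if p.1 = q.1 then u p.2 * star (u q.2) + v p.2 * star (v q.2)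
  else if p.1 = 0 then u p.2 * star (v q.2) else v p.2 * star (u q.2)

lemma blockM_mem (u v : B → ℂ) : blockM u v ∈ sepCone B := by
  have key : ∀ w : ℂ, (vecMulVec ![1, w] (star ![1, w])) ⊗ₖ
      (vecMulVec (u + star w • v) (star (u + star w • v))) ∈ sepCone B := fun w =>
    sepCone_kron (posSemidef_vecMulVec_self_star _) (posSemidef_vecMulVec_self_star _)
  have h := sepCone_smul (add_mem (add_mem (key 1) (key (-1)))
    (add_mem (key Complex.I) (key (-Complex.I)))) (1/4) (by norm_num)
  convert h using 1
  ext ⟨i, x⟩ ⟨j, y⟩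
  fin_cases i <;> fin_cases j <;> simp [blockM, vecMulVec] <;> ring_nf <;> simp <;> ring

/-- block-diagonal -/
lemma diag_mem {P Q : Matrix B B ℂ} (hP : P.PosSemidef) (hQ : Q.PosSemidef) :
    (single 0 0 1 : Matrix (Fin 2) (Fin 2) ℂ) ⊗ₖ P + (single 1 1 1 : Matrix (Fin 2) (Fin 2) ℂ) ⊗ₖ Q
      ∈ sepCone B := by
  have h0 : ∀ i : Fin 2, (single i i 1 : Matrix (Fin 2) (Fin 2) ℂ).PosSemidef := by
    intro i
    have := posSemidef_vecMulVec_self_star (Pi.single i 1 : Fin 2 → ℂ)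
    convert this using 1
    ext a b
    fin_cases i <;> fin_cases a <;> fin_cases b <;> simp [vecMulVec, single]
  exact add_mem (sepCone_kron (h0 0) hP) (sepCone_kron (h0 1) hQ)

lemma proj_psd (a : B → ℂ) : ((star a ⬝ᵥ a) • (1 : Matrix B B ℂ) - vecMulVec a (star a)).PosSemidef := by
  by_cases ha : a = 0
  · subst ha; simpa using PosSemidef.zero
  have hs : 0 < star a ⬝ᵥ a := dotProduct_star_self_pos_iff.mpr ha
  set s := star a ⬝ᵥ a with hsdef
  have hstar : star s = s := by
    rw [hsdef, ← star_dotProduct_star, star_star]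
  set M := s • (1 : Matrix B B ℂ) - vecMulVec a (star a) with hM
  have hMh : Mᴴ = M := by
    rw [hM, conjTranspose_sub, conjTranspose_smul, conjTranspose_one, conjTranspose_vecMulVec,
      hstar, star_star]
  have hsq : Mᴴ * M = s • M := by
    rw [hMh, hM]
    simp only [sub_mul, mul_sub, smul_mul_assoc, mul_smul_comm, one_mul, mul_one,
      vecMulVec_mul_vecMulVec, ← hsdef, smul_sub, vecMulVec_smul, smul_vecMulVec]
    abel
  have : M = s⁻¹ • (Mᴴ * M) := by
    rw [hsq, smul_smul, inv_mul_cancel₀ hs.ne', one_smul]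
  rw [this]
  exact (posSemidef_conjTranspose_mul_self M).smul (inv_nonneg.mpr hs.le)

lemma orth_exists (a b : B → ℂ) (hab : star a ⬝ᵥ b = 0) : ∃ u v : B → ℂ,
    vecMulVec u (star v) = vecMulVec a (star b) ∧
    ((star a ⬝ᵥ a + star b ⬝ᵥ b) • (1 : Matrix B B ℂ) - vecMulVec a (star a) - vecMulVec b (star b)
      - vecMulVec u (star u) - vecMulVec v (star v)).PosSemidef := by
  by_cases h0 : a = 0 ∨ b = 0
  · refine ⟨0, 0, ?_, ?_⟩
    · rcases h0 with h | h <;> subst h <;> simp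
    · convert (proj_psd a).add (proj_psd b) using 1
      simp [add_smul]
      abel
  push Not at h0
  obtain ⟨ha, hb⟩ := h0
  have hs : 0 < star a ⬝ᵥ a := dotProduct_star_self_pos_iff.mpr ha
  have ht : 0 < star b ⬝ᵥ b := dotProduct_star_self_pos_iff.mpr hb
  have hba : star b ⬝ᵥ a = 0 := by
    have := congrArg star hab
    rwa [← star_dotProduct_star, star_star, star_zero] at this
  obtain ⟨s, hs'⟩ : ∃ s : ℝ, star a ⬝ᵥ a = s := ⟨_, (Complex.eq_re_of_ofReal_le hs.le)⟩
  obtain ⟨t, ht'⟩ : ∃ s : ℝ, star b ⬝ᵥ b = s := ⟨_, (Complex.eq_re_of_ofReal_le ht.le)⟩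
  rw [hs'] at hs
  rw [ht'] at ht
  have hs : 0 < s := by exact_mod_cast hs
  have ht : 0 < t := by exact_mod_cast ht
  obtain ⟨r, hr, hr2⟩ : ∃ r : ℝ, 0 < r ∧ r * r = t / s :=
    ⟨√(t / s), by positivity, Real.mul_self_sqrt (by positivity)⟩
  have hrc : (r : ℂ) * r = t / s := by exact_mod_cast hr2
  have hrc0 : (r : ℂ) ≠ 0 := by exact_mod_cast hr.ne'
  have hsc : (s : ℂ) ≠ 0 := by exact_mod_cast hs.ne'
  have htc : (t : ℂ) ≠ 0 := by exact_mod_cast ht.ne'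
  refine ⟨(r : ℂ) • a, (r : ℂ)⁻¹ • b, ?_, ?_⟩
  · rw [star_smul, smul_vecMulVec, vecMulVec_smul, smul_smul, star_inv₀, Complex.star_def,
      Complex.conj_ofReal, mul_inv_cancel₀ hrc0, one_smul]
  set P : Matrix B B ℂ := 1 - (s : ℂ)⁻¹ • vecMulVec a (star a) - (t : ℂ)⁻¹ • vecMulVec b (star b)
    with hP
  have hPh : Pᴴ = P := by
    simp [hP, conjTranspose_sub, conjTranspose_smul, conjTranspose_vecMulVec]
  have hPP : Pᴴ * P = P := by
    rw [hPh, hP]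
    simp only [sub_mul, mul_sub, smul_mul_assoc, mul_smul_comm, one_mul, mul_one,
      vecMulVec_mul_vecMulVec, hs', ht', hab, hba, smul_sub, vecMulVec_smul, smul_vecMulVec,
      zero_smul, smul_zero, smul_smul, inv_mul_cancel₀ hsc, inv_mul_cancel₀ htc, mul_one]
    simp
  have hPpsd : P.PosSemidef := hPP ▸ posSemidef_conjTranspose_mul_self P
  have hst : (0 : ℂ) ≤ (s + t : ℂ) := by exact_mod_cast (by positivity : 0 ≤ s + t)
  convert hPpsd.smul hst using 1
  rw [hs', ht', hP]
  have hri : (r : ℂ)⁻¹ * (r : ℂ)⁻¹ = s / t := by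
    rw [← mul_inv, hrc, inv_div]
  have e1 : vecMulVec ((r : ℂ) • a) (star ((r : ℂ) • a)) = ((t : ℂ) / s) • vecMulVec a (star a) := by
    rw [star_smul, smul_vecMulVec, vecMulVec_smul, smul_smul, Complex.star_def,
      Complex.conj_ofReal, hrc]
  have e2 : vecMulVec ((r : ℂ)⁻¹ • b) (star ((r : ℂ)⁻¹ • b)) =
      ((s : ℂ) / t) • vecMulVec b (star b) := by
    rw [star_smul, smul_vecMulVec, vecMulVec_smul, smul_smul, star_inv₀, Complex.star_def,
      Complex.conj_ofReal, hri]
  rw [e1, e2]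
  ext x y
  simp only [Matrix.sub_apply, Matrix.smul_apply, smul_eq_mul]
  field_simp
  ring

def rhoW (W : Matrix B (Fin 2) ℂ) : Matrix (Fin 2 × B) (Fin 2 × B) ℂ :=
  fun p q => W p.2 p.1 * star (W q.2 q.1)

def sigW (W : Matrix B (Fin 2) ℂ) (α β : ℝ) : Matrix (Fin 2 × B) (Fin 2 × B) ℂ :=
  (W * Wᴴ).trace • 1 + ((α : ℂ) - β) • rhoW W +
    (β : ℂ) • ((1 : Matrix (Fin 2) (Fin 2) ℂ) ⊗ₖ (W * Wᴴ))

lemma combo (W : Matrix B (Fin 2) ℂ)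
   (α β : ℝ) (hα : max (-1) (β / 2 - 1) ≤ α) (hβ : max (-1) (α / 2 - 1) ≤ β)
   (h0 : sigW W (-1) (-1) ∈ sepCone B) (h1 : sigW W (-1) 0 ∈ sepCone B)
   (h2 : sigW W 0 (-1) ∈ sepCone B)
   (r1 : (-1 : ℂ) • rhoW W + (2 : ℂ) • ((1 : Matrix (Fin 2) (Fin 2) ℂ) ⊗ₖ (W * Wᴴ)) ∈ sepCone B)
   (r2 : (1 : ℂ) • rhoW W + (1 : ℂ) • ((1 : Matrix (Fin 2) (Fin 2) ℂ) ⊗ₖ (W * Wᴴ)) ∈ sepCone B) :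
   sigW W α β ∈ sepCone B := by
  rw [max_le_iff] at hα hβ
  obtain ⟨ha1, ha2⟩ := hα
  obtain ⟨hb1, hb2⟩ := hβ
  by_cases hS : α + β ≤ -1
  · have := add_mem (add_mem (sepCone_smul h0 (-1 - α - β) (by linarith))
      (sepCone_smul h1 (1 + β) (by linarith))) (sepCone_smul h2 (1 + α) (by linarith))
    convert this using 1
    ext p q
    simp [sigW]
    ring
  · push Not at hS
    have hpos : 0 < 1 + (α + β + 1) / 3 := by linarith
    obtain ⟨r, hr⟩ : ∃ r : ℝ, r * (1 + (α + β + 1) / 3) = β - α :=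
      ⟨(β - α) / (1 + (α + β + 1) / 3), div_mul_cancel₀ _ hpos.ne'⟩
    have hrl : -1 ≤ r := by
      by_contra h
      push Not at h
      nlinarith
    have hru : r ≤ 1 := by
      by_contra h
      push Not at h
      nlinarith
    have := add_mem (add_mem (sepCone_smul h1 ((1 + r) / 2) (by linarith))
      (sepCone_smul h2 ((1 - r) / 2) (by linarith)))
      (add_mem (sepCone_smul r1 ((α + β + 1) / 6 * (1 + r))
        (mul_nonneg (by linarith) (by linarith)))
      (sepCone_smul r2 ((α + β + 1) / 6 * (1 - r)) (mul_nonneg (by linarith) (by linarith))))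
    convert this using 1
    have hrc : (r : ℂ) * (1 + (α + β + 1) / 3) = β - α := by exact_mod_cast hr
    ext p q
    simp [sigW]
    linear_combination (rhoW W p q - (1 : Matrix (Fin 2) (Fin 2) ℂ) p.1 q.1 * (W * Wᴴ) p.2 q.2 / 2) * hrc

lemma orth_sep (W : Matrix B (Fin 2) ℂ) (hW : (Wᴴ * W) 0 1 = 0)
   (α β : ℝ) (hα : max (-1) (β / 2 - 1) ≤ α) (hβ : max (-1) (α / 2 - 1) ≤ β) :
   sigW W α β ∈ sepCone B := by
  set a : B → ℂ := fun x => W x 0 with ha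
  set b : B → ℂ := fun x => W x 1 with hb
  have hab : star a ⬝ᵥ b = 0 := hW
  obtain ⟨u, v, huv, hQ⟩ := orth_exists a b hab
  have htr : (W * Wᴴ).trace = star a ⬝ᵥ a + star b ⬝ᵥ b := by
    rw [trace_mul_comm, trace_fin_two]; rfl
  have haa := posSemidef_vecMulVec_self_star a
  have hbb := posSemidef_vecMulVec_self_star b
  have huu := posSemidef_vecMulVec_self_star u
  have hvv := posSemidef_vecMulVec_self_star v
  have huv' : ∀ x y, u x * star (v y) = a x * star (b y) := fun x y => congrFun₂ huv x y
  have hvu' : ∀ x y, v x * star (u y) = b x * star (a y) := fun x y => by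
    have := congrArg star (huv' y x)
    simpa [mul_comm] using this
  simp only [RCLike.star_def] at huv' hvu'
  have hone : ∀ x y, (W * Wᴴ) x y = a x * star (a y) + b x * star (b y) := fun x y => by
    simp [mul_apply, ha, hb]
  refine combo W α β hα hβ ?_ ?_ ?_ ?_ ?_
  · convert diag_mem ((hQ.add huu).add hvv) ((hQ.add huu).add hvv) using 1
    ext ⟨i, x⟩ ⟨j, y⟩
    fin_cases i <;> fin_cases j <;>
      simp [sigW, htr, hone, rhoW, one_apply, vecMulVec_apply] <;> ring
  · convert add_mem (blockM_mem u (-v)) (diag_mem (hQ.add hbb) (hQ.add haa)) using 1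
    ext ⟨i, x⟩ ⟨j, y⟩
    fin_cases i <;> fin_cases j <;>
      simp [sigW, htr, hone, rhoW, one_apply, vecMulVec_apply, blockM, huv', hvu', ha, hb] <;> ring
  · convert add_mem (blockM_mem u v) (diag_mem (hQ.add haa) (hQ.add hbb)) using 1
    ext ⟨i, x⟩ ⟨j, y⟩
    fin_cases i <;> fin_cases j <;>
      simp [sigW, htr, hone, rhoW, one_apply, vecMulVec_apply, blockM, huv', hvu', ha, hb] <;> ring
  · convert add_mem (blockM_mem a (-b)) (diag_mem hbb haa) using 1
    ext ⟨i, x⟩ ⟨j, y⟩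
    fin_cases i <;> fin_cases j <;>
      simp [hone, rhoW, one_apply, vecMulVec_apply, blockM, ha, hb] <;> ring
  · convert add_mem (blockM_mem a b) (diag_mem haa hbb) using 1
    ext ⟨i, x⟩ ⟨j, y⟩
    fin_cases i <;> fin_cases j <;>
      simp [hone, rhoW, one_apply, vecMulVec_apply, blockM, ha, hb] <;> ring

lemma rhoW_conj (D : Matrix B (Fin 2) ℂ) (V : Matrix (Fin 2) (Fin 2) ℂ) :
    rhoW (D * V) = (Vᵀ ⊗ₖ (1 : Matrix B B ℂ)) * rhoW D * (Vᵀᴴ ⊗ₖ (1 : Matrix B B ℂ)) := by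
  have hr : ∀ W : Matrix B (Fin 2) ℂ, rhoW W =
      vecMulVec (fun p : Fin 2 × B => W p.2 p.1) (star (fun p : Fin 2 × B => W p.2 p.1)) :=
    fun W => rfl
  have hv : (fun p : Fin 2 × B => (D * V) p.2 p.1) =
      (Vᵀ ⊗ₖ (1 : Matrix B B ℂ)) *ᵥ (fun p : Fin 2 × B => D p.2 p.1) := by
    ext ⟨i, x⟩
    simp [mulVec, dotProduct, mul_apply, Fintype.sum_prod_type, one_apply, mul_comm]
  rw [hr, hr, mul_vecMulVec, vecMulVec_mul, hv, star_mulVec, conjTranspose_kronecker,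
    conjTranspose_one]

lemma pure_sep (W : Matrix B (Fin 2) ℂ)
   (α β : ℝ) (hα : max (-1) (β / 2 - 1) ≤ α) (hβ : max (-1) (α / 2 - 1) ≤ β) :
   sigW W α β ∈ sepCone B := by
  have hG : (Wᴴ * W).IsHermitian := isHermitian_conjTranspose_mul_self W
  set V : Matrix (Fin 2) (Fin 2) ℂ := (hG.eigenvectorUnitary : Matrix (Fin 2) (Fin 2) ℂ) with hV
  have hV1 : Vᴴ * V = 1 := Unitary.coe_star_mul_self hG.eigenvectorUnitary
  have hV2 : V * Vᴴ = 1 := Unitary.coe_mul_star_self hG.eigenvectorUnitary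
  have hsp : Wᴴ * W = V * diagonal (RCLike.ofReal ∘ hG.eigenvalues) * Vᴴ := by
    have := hG.spectral_theorem
    rwa [Unitary.conjStarAlgAut_apply] at this
  generalize (RCLike.ofReal ∘ hG.eigenvalues : Fin 2 → ℂ) = D at hsp
  have horth : ((W * V)ᴴ * (W * V)) 0 1 = 0 := by
    have : (W * V)ᴴ * (W * V) = diagonal D := by
      calc (W * V)ᴴ * (W * V) = Vᴴ * (Wᴴ * W) * V := by
            rw [conjTranspose_mul]; simp only [Matrix.mul_assoc]
        _ = (Vᴴ * V) * diagonal D * (Vᴴ * V) := by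
            rw [hsp]; simp only [Matrix.mul_assoc]
        _ = _ := by rw [hV1, one_mul, mul_one]
    rw [this]
    simp
  have h := sepCone_conj (orth_sep (W * V) horth α β hα hβ) (Vᴴᵀ)
  convert h using 1
  have hWW : W * V * (W * V)ᴴ = W * Wᴴ := by
    rw [conjTranspose_mul, Matrix.mul_assoc, ← Matrix.mul_assoc V, hV2, Matrix.one_mul]
  have hU : Vᴴᵀ * Vᴴᵀᴴ = 1 := by
    have : Vᴴᵀᴴ = Vᵀ := by ext i j; simp
    rw [this, ← transpose_mul, hV2, transpose_one]
  have hWd : W = W * V * Vᴴ := by rw [Matrix.mul_assoc, hV2, Matrix.mul_one]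
  have hrho := rhoW_conj (W * V) Vᴴ
  rw [← hWd] at hrho
  unfold sigW
  rw [hWW, hrho]
  simp only [mul_add, add_mul, mul_smul_comm, smul_mul_assoc, mul_one, ← mul_kronecker_mul, hU,
    one_mul, one_kronecker_one]

/-- `𝟙 ⊗ Tr_A ρ` -/
def ptrace (ρ : Matrix (Fin 2 × B) (Fin 2 × B) ℂ) : Matrix (Fin 2 × B) (Fin 2 × B) ℂ :=
  fun p q => if p.1 = q.1 then ∑ k, ρ (k, p.2) (k, q.2) else 0

lemma psd_sep (ρ : Matrix (Fin 2 × B) (Fin 2 × B) ℂ) (hρ : ρ.PosSemidef)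
   (α β : ℝ) (hα : max (-1) (β / 2 - 1) ≤ α) (hβ : max (-1) (α / 2 - 1) ≤ β) :
   ρ.trace • (1 : Matrix (Fin 2 × B) (Fin 2 × B) ℂ) + (α : ℂ) • ρ + (β : ℂ) • (ptrace ρ - ρ)
     ∈ sepCone B := by
  obtain ⟨m, v, rfl⟩ := Matrix.posSemidef_iff_eq_sum_vecMulVec.mp hρ
  obtain ⟨W, hW⟩ : ∃ W : Fin m → Matrix B (Fin 2) ℂ, ∀ k x i, W k x i = v k (i, x) :=
    ⟨fun k x i => v k (i, x), fun _ _ _ => rfl⟩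
  have h := sum_mem (t := Finset.univ)
    (fun k (_ : k ∈ Finset.univ) => pure_sep (W k) α β hα hβ)
  convert h using 1
  have h1 : ∀ k, (vecMulVec (v k) (star (v k))) = rhoW (W k) := fun k => by
    ext p q
    simp [rhoW, hW, vecMulVec_apply]
  ext p q
  simp only [h1, Matrix.sum_apply, sigW, Matrix.add_apply, Matrix.sub_apply, Matrix.smul_apply,
    Finset.sum_add_distrib, smul_eq_mul, trace_sum, ← Finset.sum_mul, ← Finset.mul_sum]
  have h2 : ptrace (∑ k, rhoW (W k)) p q =
      ∑ k, ((1 : Matrix (Fin 2) (Fin 2) ℂ) ⊗ₖ (W k * (W k)ᴴ)) p q := by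
    by_cases h : p.1 = q.1
    · simp [ptrace, Matrix.sum_apply, rhoW, h, mul_apply, one_apply, Finset.sum_add_distrib]
    · simp [ptrace, h]
  have h3 : ∀ k, (rhoW (W k)).trace = (W k * (W k)ᴴ).trace := fun k => by
    simp [trace, rhoW, mul_apply, Fintype.sum_prod_type, Finset.sum_add_distrib]
  rw [h2]
  simp only [h3]
  ring

end

section
open Matrix Kronecker

lemma SepAcross.add {N : ℕ} {X : Finset (Fin N)} {σ τ : Matrix (Fin N → Fin 2) (Fin N → Fin 2) ℂ}
    (hσ : SepAcross X σ) (hτ : SepAcross X τ) : SepAcross X (σ + τ) := by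
  obtain ⟨K, A, B, hA, hB, h⟩ := hσ
  obtain ⟨K', A', B', hA', hB', h'⟩ := hτ
  refine ⟨K + K', Fin.append A A', Fin.append B B', ?_, ?_, ?_⟩
  · intro k; refine Fin.addCases (fun i => ?_) (fun i => ?_) k <;> simp [hA, hA']
  · intro k; refine Fin.addCases (fun i => ?_) (fun i => ?_) k <;> simp [hB, hB']
  · intro x y
    simp [Fin.sum_univ_add, h, h']

/-- splitting off the qubit `z` -/
def splitEquiv {N : ℕ} (z : Fin N) :
    (Fin N → Fin 2) ≃ Fin 2 × ({i // i ∈ ({z} : Finset (Fin N))ᶜ} → Fin 2) where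
  toFun x := (x z, fun i => x i.1)
  invFun p := fun i => if h : i ∈ ({z} : Finset (Fin N))ᶜ then p.2 ⟨i, h⟩ else p.1
  left_inv x := by
    ext i
    by_cases h : i = z <;> simp [h]
  right_inv p := by
    refine Prod.ext ?_ ?_
    · simp
    · funext i
      have := i.2
      simp only [this, dif_pos]

lemma SepAcross.of_sepCone {N : ℕ} (z : Fin N)
    {M : Matrix (Fin 2 × ({i // i ∈ ({z} : Finset (Fin N))ᶜ} → Fin 2))
      (Fin 2 × ({i // i ∈ ({z} : Finset (Fin N))ᶜ} → Fin 2)) ℂ}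
    (hM : M ∈ sepCone ({i // i ∈ ({z} : Finset (Fin N))ᶜ} → Fin 2)) :
    SepAcross {z} (M.submatrix (splitEquiv z) (splitEquiv z)) := by
  induction hM using AddSubmonoid.closure_induction with
  | mem x hx =>
    obtain ⟨P, Q, hP, hQ, rfl⟩ := hx
    refine ⟨1, fun _ => P.submatrix (fun f => f ⟨z, by simp⟩) (fun f => f ⟨z, by simp⟩),
      fun _ => Q, fun _ => hP.submatrix _, fun _ => hQ, fun x y => ?_⟩
    simp [splitEquiv]
  | zero => exact ⟨0, fun _ => 0, fun _ => 0, fun k => k.elim0, fun k => k.elim0, by simp⟩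
  | add x y _ _ hx hy => exact hx.add hy

lemma pauliYat_apply {N : ℕ} (z : Fin N) (x y : Fin N → Fin 2) :
    pauliYat {z} x y =
      if y = Function.update x z (1 - x z) then pauliY (x z) (1 - x z) else 0 := by
  unfold pauliYat
  split_ifs with h
  · subst h
    rw [Finset.prod_eq_single z]
    · simp
    · intro i _ hi; simp [hi]
    · simp
  · by_cases h' : ∀ i, i ≠ z → x i = y i
    · refine Finset.prod_eq_zero (Finset.mem_univ z) ?_
      have : y z = x z := by
        by_contra hne
        apply h
        funext i
        by_cases hi : i = z
        · subst hi
          simp only [Function.update_self]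
          generalize x i = a at *
          generalize y i = b at *
          fin_cases a <;> fin_cases b <;> simp_all
        · simp [hi, h' i hi]
      rw [this]
      generalize x z = a
      fin_cases a <;> simp [pauliY]
    · push Not at h'
      obtain ⟨i, hi, hne⟩ := h'
      exact Finset.prod_eq_zero (Finset.mem_univ i) (by simp [hi, hne])


lemma tilde_apply {N : ℕ} (z : Fin N) (ρ : Matrix (Fin N → Fin 2) (Fin N → Fin 2) ℂ)
    (x y : Fin N → Fin 2) :
    tildeAt {z} ρ x y =
      (if x z = y z then ∑ k, ρ (Function.update x z k) (Function.update y z k) else 0) - ρ x y := by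
  have hinv : ∀ w : Fin N → Fin 2, y = Function.update w z (1 - w z) ↔
      w = Function.update y z (1 - y z) := by
    intro w
    constructor <;> rintro rfl <;> simp
  have hp : ∀ a b : Fin 2, pt {z} ρ (Function.update x z a) (Function.update y z b) =
      ρ (Function.update x z b) (Function.update y z a) := by
    intro a b
    unfold pt
    congr 1 <;> funext i <;> by_cases hi : i = z <;> simp [hi]
    all_goals (subst hi; simp)
  unfold tildeAt
  simp only [mul_apply, pauliYat_apply, hinv]
  simp only [ite_mul, zero_mul, mul_ite, mul_zero, Finset.sum_ite_eq', Finset.sum_ite_eq,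
    Finset.mem_univ, if_true, hp]
  have hx : ρ x y = ρ (Function.update x z (x z)) (Function.update y z (y z)) := by simp
  rw [hx]
  simp only [Function.update_self]
  generalize x z = a
  generalize y z = b
  fin_cases a <;> fin_cases b <;> simp [pauliY] <;> ring_nf <;> simp
end

/-- Breuer-Hall-inspired map: `Tr(ρ)𝟙 + αρ + βρ̃_A` is biseparable across the
`1:(N-1)` bipartition at qubit `0`. -/
theorem stmt11 (N : ℕ) (hN : 2 ≤ N)
    (ρ : Matrix (Fin N → Fin 2) (Fin N → Fin 2) ℂ) (hρ : ρ.PosSemidef)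
    (α β : ℝ) (hα : max (-1) (β / 2 - 1) ≤ α) (hβ : max (-1) (α / 2 - 1) ≤ β) :
    SepAcross {⟨0, by omega⟩}
      (ρ.trace • (1 : Matrix (Fin N → Fin 2) (Fin N → Fin 2) ℂ) + (α : ℂ) • ρ +
        (β : ℂ) • tildeAt {⟨0, by omega⟩} ρ) := by
  generalize_proofs hz
  set z : Fin N := ⟨0, hz⟩ with hzdef
  set e := splitEquiv z with he
  have h := SepAcross.of_sepCone z (psd_sep (ρ.submatrix e.symm e.symm) (hρ.submatrix _) α β hα hβ)
  convert h using 1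
  have htr : (ρ.submatrix e.symm e.symm).trace = ρ.trace := by
    simp only [Matrix.trace, Matrix.diag, Matrix.submatrix_apply]
    exact e.symm.sum_comp (fun i => ρ i i)
  have hupd : ∀ (x : Fin N → Fin 2) (k : Fin 2), e.symm (k, (e x).2) = Function.update x z k := by
    intro x k
    rw [Equiv.symm_apply_eq]
    refine Prod.ext ?_ ?_
    · simp [he, splitEquiv]
    · funext i
      have : i.1 ≠ z := by
        have h2 := i.2
        rwa [Finset.mem_compl, Finset.mem_singleton] at h2
      simp [he, splitEquiv, this]
  have hfst : ∀ x : Fin N → Fin 2, (e x).1 = x z := fun x => rfl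
  ext x y
  simp only [Matrix.submatrix_apply, Matrix.add_apply, Matrix.smul_apply, Matrix.sub_apply,
    tilde_apply, htr, ptrace, hupd, hfst, ← he, Matrix.one_apply, EmbeddingLike.apply_eq_iff_eq,
    Function.update_eq_self]
end
end

section
/- Let N ≥ 2 and let σ be a Hermitian N-qubit operator. If the matrix σ − σ̃_A/2 is positive definite, or if the matrix σ̃_A − σ/2 is positive definite, then σ is biseparable across the 1:(N−1) bipartition at qubit 0. -/
open scoped ComplexOrder

noncomputable section

open Matrix in
theorem sep_aux {N : ℕ} (o : Fin N) (σ τ : Matrix (Fin N → Fin 2) (Fin N → Fin 2) ℂ)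
    (hτ : τ.PosSemidef) (K : ℕ) (c : Fin K → ℝ) (hc : ∀ k, 0 ≤ c k)
    (u v : Fin K → Fin 2 → ℂ)
    (h : ∀ x y, σ x y = ∑ k, ((c k : ℂ) * (u k (x o) * star (u k (y o)))) *
      ∑ s, ∑ t, star (v k s) * v k t * τ (Function.update x o s) (Function.update y o t)) :
    SepAcross {o} σ := by
  classical
  let g : Fin 2 × ({i // i ∈ ({o} : Finset (Fin N))ᶜ} → Fin 2) → (Fin N → Fin 2) :=
    fun p i => if hi : i ∈ ({o} : Finset (Fin N))ᶜ then p.2 ⟨i, hi⟩ else p.1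
  have hg : ∀ s (x : Fin N → Fin 2), g (s, fun i => x i.1) = Function.update x o s := by
    intro s x
    funext i
    by_cases hi : i = o
    · subst hi; simp [g]
    · simp [g, hi]
  let W : Fin K → Matrix (Fin 2 × ({i // i ∈ ({o} : Finset (Fin N))ᶜ} → Fin 2))
      ({i // i ∈ ({o} : Finset (Fin N))ᶜ} → Fin 2) ℂ :=
    fun k p y => if p.2 = y then v k p.1 else 0
  refine ⟨K, fun k => (c k : ℂ) • vecMulVec (fun a => u k (a ⟨o, by simp⟩))
      (star (fun a => u k (a ⟨o, by simp⟩))),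
    fun k => (W k)ᴴ * τ.submatrix g g * W k, ?_, ?_, ?_⟩
  · intro k
    exact (posSemidef_vecMulVec_self_star _).smul (by exact_mod_cast hc k)
  · intro k
    exact (hτ.submatrix g).conjTranspose_mul_mul_same _
  · intro x y
    rw [h]
    refine Finset.sum_congr rfl fun k _ => ?_
    refine congrArg₂ (· * ·) ?_ ?_
    · simp [vecMulVec_apply]
    · have hW : ∀ p y, W k p y = if p.2 = y then v k p.1 else 0 := fun _ _ => rfl
      simp only [Matrix.mul_apply, Matrix.conjTranspose_apply, Matrix.submatrix_apply, hW,
        Fintype.sum_prod_type, apply_ite star, star_zero, ite_mul, mul_ite, zero_mul, mul_zero,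
        Finset.sum_ite_eq', Finset.mem_univ, if_true, hg, Finset.sum_mul]
      rw [Finset.sum_comm]
      refine Finset.sum_congr rfl fun t _ => ?_
      refine Finset.sum_congr rfl fun s _ => ?_
      ring

theorem pauliYat_eq {N : ℕ} (o : Fin N) (x z : Fin N → Fin 2) :
    pauliYat {o} x z =
      if z = Function.update x o (1 - x o) then pauliY (x o) (1 - x o) else 0 := by
  classical
  unfold pauliYat
  split_ifs with hz
  · subst hz
    rw [Finset.prod_eq_single o]
    · simp
    · intro i _ hi
      simp [hi]
    · simp
  · by_cases hzo : z o = 1 - x o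
    · have : ∃ i, i ≠ o ∧ x i ≠ z i := by
        by_contra hcon
        push Not at hcon
        apply hz
        funext i
        by_cases hi : i = o
        · subst hi; simp [hzo]
        · simp [hi, hcon i hi]
      obtain ⟨i, hi, hxi⟩ := this
      exact Finset.prod_eq_zero (Finset.mem_univ i) (by simp [hi, hxi])
    · apply Finset.prod_eq_zero (Finset.mem_univ o)
      generalize x o = a at *
      generalize z o = b at *
      fin_cases a <;> fin_cases b <;> simp_all [pauliY]

theorem pauliYat_eq' {N : ℕ} (o : Fin N) (z y : Fin N → Fin 2) :
    pauliYat {o} z y =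
      if z = Function.update y o (1 - y o) then pauliY (1 - y o) (y o) else 0 := by
  rw [pauliYat_eq]
  have key : (y = Function.update z o (1 - z o)) ↔ z = Function.update y o (1 - y o) := by
    constructor <;> (intro h; subst h; simp)
  by_cases h : z = Function.update y o (1 - y o)
  · rw [if_pos h, if_pos (key.2 h)]
    subst h; simp
  · rw [if_neg h, if_neg (fun h' => h (key.1 h'))]

theorem tilde_eq {N : ℕ} (o : Fin N) (σ : Matrix (Fin N → Fin 2) (Fin N → Fin 2) ℂ)
    (x y : Fin N → Fin 2) :
    tildeAt {o} σ x y = pauliY (x o) (1 - x o) * pauliY (1 - y o) (y o) *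
      σ (Function.update x o (1 - y o)) (Function.update y o (1 - x o)) := by
  classical
  have e : ∀ a b : Fin N → Fin 2, pt {o} σ a b =
      σ (Function.update a o (b o)) (Function.update b o (a o)) := by
    intro a b
    unfold pt
    congr 1 <;> (funext i; by_cases hi : i = o
                 · subst hi; simp
                 · simp [hi])
  unfold tildeAt
  simp only [Matrix.mul_apply, pauliYat_eq' o _ y, pauliYat_eq o x, ite_mul, mul_ite, zero_mul,
    mul_zero, Finset.sum_ite_eq', Finset.sum_ite_eq, Finset.mem_univ, if_true, e]
  simp
  ring

/-- Unnormalised Pauli eigenvectors. -/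
def pauliVec : Fin 6 → Fin 2 → ℂ :=
  ![![1, 0], ![0, 1], ![1, 1], ![1, -1], ![1, Complex.I], ![1, -Complex.I]]

/-- Their orthogonal complements. -/
def pauliPerp : Fin 6 → Fin 2 → ℂ :=
  ![![0, 1], ![1, 0], ![1, -1], ![1, 1], ![1, -Complex.I], ![1, Complex.I]]

def pauliWt : Fin 6 → ℝ := ![2/3, 2/3, 1/6, 1/6, 1/6, 1/6]

theorem pauliWt_nonneg (k : Fin 6) : 0 ≤ pauliWt k := by
  fin_cases k <;> norm_num [pauliWt]

theorem stmt13 (N : ℕ) (hN : 2 ≤ N)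
    (σ : Matrix (Fin N → Fin 2) (Fin N → Fin 2) ℂ) (hσ : σ.IsHermitian)
    (h : (σ - (2 : ℂ)⁻¹ • tildeAt {⟨0, by omega⟩} σ).PosDef ∨
         (tildeAt {⟨0, by omega⟩} σ - (2 : ℂ)⁻¹ • σ).PosDef) :
    SepAcross {⟨0, by omega⟩} σ := by
  generalize (⟨0, by omega⟩ : Fin N) = o at *
  rcases h with h | h
  · refine sep_aux o σ _ h.posSemidef 6 pauliWt pauliWt_nonneg pauliVec pauliVec ?_
    intro x y
    have hx := Function.update_eq_self o x
    have hy := Function.update_eq_self o y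
    simp only [Matrix.sub_apply, Matrix.smul_apply, tilde_eq, Function.update_self,
      Function.update_idem, smul_eq_mul]
    generalize x o = a at *
    generalize y o = b at *
    rw [← hx, ← hy]
    simp only [Function.update_idem]
    generalize hf : (fun s t => σ (Function.update x o s) (Function.update y o t)) = f
    have hf' : ∀ s t, σ (Function.update x o s) (Function.update y o t) = f s t := by
      intro s t; rw [← hf]
    simp only [hf']
    fin_cases a <;> fin_cases b <;>
      simp [Fin.sum_univ_succ, pauliVec, pauliWt, pauliY] <;> ring_nf <;>
      simp only [Complex.I_sq, Complex.I_pow_four, Complex.I_pow_three] <;> ring_nf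
  · refine sep_aux o σ _ h.posSemidef 6 pauliWt pauliWt_nonneg pauliPerp pauliVec ?_
    intro x y
    have hx := Function.update_eq_self o x
    have hy := Function.update_eq_self o y
    simp only [Matrix.sub_apply, Matrix.smul_apply, tilde_eq, Function.update_self,
      Function.update_idem, smul_eq_mul]
    generalize x o = a at *
    generalize y o = b at *
    rw [← hx, ← hy]
    simp only [Function.update_idem]
    generalize hf : (fun s t => σ (Function.update x o s) (Function.update y o t)) = f
    have hf' : ∀ s t, σ (Function.update x o s) (Function.update y o t) = f s t := by
      intro s t; rw [← hf]
    simp only [hf']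
    fin_cases a <;> fin_cases b <;>
      simp [Fin.sum_univ_succ, pauliVec, pauliPerp, pauliWt, pauliY] <;> ring_nf <;>
      simp only [Complex.I_sq, Complex.I_pow_four, Complex.I_pow_three] <;> ring_nf
end
end

section
/- Let N ≥ 2, let ρ be a positive semidefinite N-qubit operator, let p : Fin N → ℝ with p_i ≥ 0 and Σ_i p_i = 1, and for each i ∈ Fin N let α_i, β_i be real numbers with α_i ≥ max(−1, β_i/2 − 1) and β_i ≥ max(−1, α_i/2 − 1). Then σ = Σ_{i ∈ Fin N} p_i · (Tr(ρ)·𝟙 + α_i·ρ + β_i·ρ̃_i) can be written as σ = Σ_{i ∈ Fin N} p_i · τ_i, where each τ_i is biseparable across the 1:(N−1) bipartition at qubit i; in particular σ has entanglement depth at most N − 1. -/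
open scoped ComplexOrder

noncomputable section

open Matrix in
/-- Product generators of the separable cone. -/
def krS {ι : Type} (A : Matrix (Fin 2) (Fin 2) ℂ) (B : Matrix ι ι ℂ) :
    Matrix (Fin 2 × ι) (Fin 2 × ι) ℂ := fun x y => A x.1 y.1 * B x.2 y.2

/-- The separable cone. -/
def SS (ι : Type) [Fintype ι] : AddSubmonoid (Matrix (Fin 2 × ι) (Fin 2 × ι) ℂ) :=
  AddSubmonoid.closure {M | ∃ A B, A.PosSemidef ∧ B.PosSemidef ∧ M = krS A B}

lemma SS_kr {ι : Type} [Fintype ι] {A : Matrix (Fin 2) (Fin 2) ℂ} {B : Matrix ι ι ℂ}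
    (hA : A.PosSemidef) (hB : B.PosSemidef) : krS A B ∈ SS ι :=
  AddSubmonoid.subset_closure ⟨A, B, hA, hB, rfl⟩

lemma SS_smul {ι : Type} [Fintype ι] {M : Matrix (Fin 2 × ι) (Fin 2 × ι) ℂ}
    (hM : M ∈ SS ι) (r : ℝ) (hr : 0 ≤ r) : (r : ℂ) • M ∈ SS ι := by
  induction hM using AddSubmonoid.closure_induction with
  | mem M h =>
    obtain ⟨A, B, hA, hB, rfl⟩ := h
    have : (r : ℂ) • krS A B = krS ((r : ℂ) • A) B := by
      ext x y; simp [krS, mul_assoc]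
    rw [this]
    exact SS_kr (hA.smul (by exact_mod_cast hr)) hB
  | zero => simp
  | add x y _ _ hx hy => rw [smul_add]; exact add_mem hx hy

/-- Lift of a superoperator on the qubit. -/
def liftS {ι : Type} (L : Matrix (Fin 2) (Fin 2) ℂ →ₗ[ℂ] Matrix (Fin 2) (Fin 2) ℂ)
    (M : Matrix (Fin 2 × ι) (Fin 2 × ι) ℂ) : Matrix (Fin 2 × ι) (Fin 2 × ι) ℂ :=
  fun x y => L (fun c d => M (c, x.2) (d, y.2)) x.1 y.1

lemma liftS_add {ι : Type} (L : Matrix (Fin 2) (Fin 2) ℂ →ₗ[ℂ] Matrix (Fin 2) (Fin 2) ℂ)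
    (M M' : Matrix (Fin 2 × ι) (Fin 2 × ι) ℂ) : liftS L (M + M') = liftS L M + liftS L M' := by
  ext x y
  have := congrFun (congrFun (L.map_add (fun c d => M (c, x.2) (d, y.2))
    (fun c d => M' (c, x.2) (d, y.2))) x.1) y.1
  exact this

lemma liftS_mem {ι : Type} [Fintype ι]
    (L : Matrix (Fin 2) (Fin 2) ℂ →ₗ[ℂ] Matrix (Fin 2) (Fin 2) ℂ)
    (hL : ∀ A, A.PosSemidef → (L A).PosSemidef)
    {M : Matrix (Fin 2 × ι) (Fin 2 × ι) ℂ} (hM : M ∈ SS ι) : liftS L M ∈ SS ι := by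
  induction hM using AddSubmonoid.closure_induction with
  | mem M h =>
    obtain ⟨A, B, hA, hB, rfl⟩ := h
    have : liftS L (krS A B) = krS (L A) B := by
      ext x y
      have := congrFun (congrFun (L.map_smul (B x.2 y.2) A) x.1) y.1
      have h2 : (fun c d => krS A B (c, x.2) (d, y.2)) = B x.2 y.2 • A := by
        ext c d; simp [krS, mul_comm]
      unfold liftS
      rw [h2, this]; simp [krS, mul_comm]
    rw [this]
    exact SS_kr (hL _ hA) hB
  | zero =>
    have : liftS L (0 : Matrix (Fin 2 × ι) (Fin 2 × ι) ℂ) = 0 := by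
      ext x y
      exact congrFun (congrFun L.map_zero x.1) y.1
    rw [this]; exact zero_mem _
  | add x y _ _ hx hy => rw [liftS_add]; exact add_mem hx hy

/-- The qubit spin flip. -/
def flipL : Matrix (Fin 2) (Fin 2) ℂ →ₗ[ℂ] Matrix (Fin 2) (Fin 2) ℂ where
  toFun A := !![A 1 1, -A 0 1; -A 1 0, A 0 0]
  map_add' A B := by ext a b; fin_cases a <;> fin_cases b <;> simp <;> ring
  map_smul' r A := by ext a b; fin_cases a <;> fin_cases b <;> simp

/-- Conjugation. -/
def conjL (U : Matrix (Fin 2) (Fin 2) ℂ) :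
    Matrix (Fin 2) (Fin 2) ℂ →ₗ[ℂ] Matrix (Fin 2) (Fin 2) ℂ where
  toFun A := U * A * U.conjTranspose
  map_add' A B := by simp [mul_add, add_mul]
  map_smul' r A := by simp

lemma conjL_pos (U A : Matrix (Fin 2) (Fin 2) ℂ) (hA : A.PosSemidef) :
    (conjL U A).PosSemidef := hA.mul_mul_conjTranspose_same U

lemma flipL_pos (A : Matrix (Fin 2) (Fin 2) ℂ) (hA : A.PosSemidef) :
    (flipL A).PosSemidef := by
  have := hA.transpose.mul_mul_conjTranspose_same !![0, 1; -1, 0]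
  have e : flipL A = !![0, 1; -1, 0] * A.transpose * (!![0, 1; -1, 0]).conjTranspose := by
    ext a b
    fin_cases a <;> fin_cases b <;> 
      simp [flipL, Matrix.mul_apply, Fin.sum_univ_two, Matrix.vecMul, dotProduct]
  rw [e]
  exact this

/-- Rank one operator. -/
def pr {ι : Type} (Ψ : Matrix (Fin 2) ι ℂ) : Matrix (Fin 2 × ι) (Fin 2 × ι) ℂ :=
  fun x y => Ψ x.1 x.2 * star (Ψ y.1 y.2)

/-- inner product of vectors -/
def ip {ι : Type} [Fintype ι] (u v : ι → ℂ) : ℂ := ∑ m, u m * star (v m)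

lemma ip_self {ι : Type} [Fintype ι] (u : ι → ℂ) : ip u u = ((∑ m, ‖u m‖ ^ 2 : ℝ) : ℂ) := by
  simp [ip, Complex.mul_conj, Complex.normSq_eq_norm_sq]

lemma ip_star {ι : Type} [Fintype ι] (u v : ι → ℂ) : star (ip u v) = ip v u := by
  simp [ip, mul_comm]

lemma ip_zero {ι : Type} [Fintype ι] (u : ι → ℂ) (h : ip u u = 0) : u = 0 := by
  rw [ip_self] at h
  have h' : (∑ m, ‖u m‖ ^ 2 : ℝ) = 0 := by exact_mod_cast h
  rw [Finset.sum_eq_zero_iff_of_nonneg (fun _ _ => by positivity)] at h'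
  ext m
  simpa using h' m (Finset.mem_univ _)

/-- outer product -/
def op {ι : Type} (u v : ι → ℂ) : Matrix ι ι ℂ := fun m n => u m * star (v n)

lemma op_pos {ι : Type} [Fintype ι] (u : ι → ℂ) : (op u u).PosSemidef :=
  Matrix.posSemidef_vecMulVec_self_star u

lemma op_mul {ι : Type} [Fintype ι] (u v w z : ι → ℂ) : op u v * op w z = ip w v • op u z := by
  ext m n
  simp only [op, Matrix.mul_apply, ip, Matrix.smul_apply, smul_eq_mul, Finset.sum_mul]
  exact Finset.sum_congr rfl fun _ _ => by ring

lemma P_pos {ι : Type} [Fintype ι] [DecidableEq ι] (u v : ι → ℂ) (h : ip u v = 0) :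
    ((1 : Matrix ι ι ℂ) - (ip u u)⁻¹ • op u u - (ip v v)⁻¹ • op v v).PosSemidef := by
  have hH : ∀ w : ι → ℂ, ((ip w w)⁻¹ • op w w).conjTranspose = (ip w w)⁻¹ • op w w := by
    intro w
    rw [Matrix.conjTranspose_smul, star_inv₀, ip_star, (op_pos w).1.eq]
  have h' : ip v u = 0 := by rw [← ip_star, h, star_zero]
  have hI : ∀ w : ι → ℂ, ((ip w w)⁻¹ • op w w) * ((ip w w)⁻¹ • op w w) = (ip w w)⁻¹ • op w w := by
    intro w
    rw [smul_mul_smul_comm, op_mul, smul_smul]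
    by_cases hw : ip w w = 0
    · simp [hw]
    · congr 1; field_simp
  have h1 : ((ip u u)⁻¹ • op u u) * ((ip v v)⁻¹ • op v v) = 0 := by
    rw [smul_mul_smul_comm, op_mul, h', zero_smul, smul_zero]
  have h2 : ((ip v v)⁻¹ • op v v) * ((ip u u)⁻¹ • op u u) = 0 := by
    rw [smul_mul_smul_comm, op_mul, h, zero_smul, smul_zero]
  have key := Matrix.posSemidef_conjTranspose_mul_self
    ((1 : Matrix ι ι ℂ) - (ip u u)⁻¹ • op u u - (ip v v)⁻¹ • op v v)
  convert key using 1
  rw [Matrix.conjTranspose_sub, Matrix.conjTranspose_sub, hH, hH, Matrix.conjTranspose_one]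
  have hu := hI u
  have hv := hI v
  generalize (ip u u)⁻¹ • op u u = X at *
  generalize (ip v v)⁻¹ • op v v = Y at *
  simp only [mul_sub, sub_mul, one_mul, mul_one, h1, h2, hu, hv]
  abel

/-- The block matrix with diagonal blocks xx*+yy* and off-diagonal blocks xy*, yx*. -/
def WW {ι : Type} (x y : ι → ℂ) : Matrix (Fin 2 × ι) (Fin 2 × ι) ℂ :=
  krS 1 (op x x + op y y) + krS !![0, 1; 0, 0] (op x y) + krS !![0, 0; 1, 0] (op y x)

lemma WW_mem {ι : Type} [Fintype ι] (x y : ι → ℂ) : WW x y ∈ SS ι := by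
  let F : ℂ → Matrix (Fin 2 × ι) (Fin 2 × ι) ℂ := fun c =>
    krS (op ![1, c] ![1, c]) (op (x + star c • y) (x + star c • y))
  have hF : ∀ c, F c ∈ SS ι := fun c => SS_kr (op_pos _) (op_pos _)
  have e : WW x y = ((1 / 4 : ℝ) : ℂ) • (F 1 + F (-1) + F Complex.I + F (-Complex.I)) := by
    ext ⟨a, m⟩ ⟨b, n⟩
    fin_cases a <;> fin_cases b <;> simp [WW, F, krS, op] <;> ring_nf <;>
      simp only [Complex.I_sq] <;> ring
  rw [e]
  exact SS_smul (add_mem (add_mem (add_mem (hF _) (hF _)) (hF _)) (hF _)) _ (by norm_num)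

lemma E00_pos : (!![1, 0; 0, 0] : Matrix (Fin 2) (Fin 2) ℂ).PosSemidef := by
  have := op_pos (![1, 0] : Fin 2 → ℂ)
  have e : (!![1, 0; 0, 0] : Matrix (Fin 2) (Fin 2) ℂ) = op ![1, 0] ![1, 0] := by
    ext a b; fin_cases a <;> fin_cases b <;> simp [op]
  rwa [e]

lemma E11_pos : (!![0, 0; 0, 1] : Matrix (Fin 2) (Fin 2) ℂ).PosSemidef := by
  have := op_pos (![0, 1] : Fin 2 → ℂ)
  have e : (!![0, 0; 0, 1] : Matrix (Fin 2) (Fin 2) ℂ) = op ![0, 1] ![0, 1] := by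
    ext a b; fin_cases a <;> fin_cases b <;> simp [op]
  rwa [e]

/-- ray (2,1) -/
lemma ray21 {ι : Type} [Fintype ι] (Ψ : Matrix (Fin 2) ι ℂ) :
    (2 : ℂ) • pr Ψ + liftS flipL (pr Ψ) ∈ SS ι := by
  have e : (2 : ℂ) • pr Ψ + liftS flipL (pr Ψ) =
      krS !![1, 0; 0, 0] (op (Ψ 0) (Ψ 0)) + krS !![0, 0; 0, 1] (op (Ψ 1) (Ψ 1))
        + WW (Ψ 0) (Ψ 1) := by
    ext ⟨a, m⟩ ⟨b, n⟩
    fin_cases a <;> fin_cases b <;> simp [WW, krS, op, liftS, flipL, pr] <;> ring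
  rw [e]
  exact add_mem (add_mem (SS_kr E00_pos (op_pos _)) (SS_kr E11_pos (op_pos _))) (WW_mem _ _)

lemma flipS_flipS {ι : Type} (M : Matrix (Fin 2 × ι) (Fin 2 × ι) ℂ) :
    liftS flipL (liftS flipL M) = M := by
  ext ⟨a, m⟩ ⟨b, n⟩
  fin_cases a <;> fin_cases b <;> simp [liftS, flipL]

lemma flipS_one {ι : Type} [DecidableEq ι] :
    liftS flipL (1 : Matrix (Fin 2 × ι) (Fin 2 × ι) ℂ) = 1 := by
  ext ⟨a, m⟩ ⟨b, n⟩
  fin_cases a <;> fin_cases b <;> simp [liftS, flipL, Matrix.one_apply]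

lemma liftS_smul {ι : Type} (L : Matrix (Fin 2) (Fin 2) ℂ →ₗ[ℂ] Matrix (Fin 2) (Fin 2) ℂ)
    (r : ℂ) (M : Matrix (Fin 2 × ι) (Fin 2 × ι) ℂ) : liftS L (r • M) = r • liftS L M := by
  ext x y
  exact congrFun (congrFun (L.map_smul r (fun c d => M (c, x.2) (d, y.2))) x.1) y.1

lemma liftS_sub {ι : Type} (L : Matrix (Fin 2) (Fin 2) ℂ →ₗ[ℂ] Matrix (Fin 2) (Fin 2) ℂ)
    (M M' : Matrix (Fin 2 × ι) (Fin 2 × ι) ℂ) : liftS L (M - M') = liftS L M - liftS L M' := by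
  ext x y
  exact congrFun (congrFun (L.map_sub (fun c d => M (c, x.2) (d, y.2))
    (fun c d => M' (c, x.2) (d, y.2))) x.1) y.1

/-- ray (1,2) -/
lemma ray12 {ι : Type} [Fintype ι] (Ψ : Matrix (Fin 2) ι ℂ) :
    pr Ψ + (2 : ℂ) • liftS flipL (pr Ψ) ∈ SS ι := by
  have := liftS_mem flipL flipL_pos (ray21 Ψ)
  rwa [liftS_add, liftS_smul, flipS_flipS, add_comm] at this

/-- squared norm -/
def nrm {ι : Type} [Fintype ι] (Ψ : Matrix (Fin 2) ι ℂ) : ℂ := ip (Ψ 0) (Ψ 0) + ip (Ψ 1) (Ψ 1)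

lemma one_sub_pos {ι : Type} [Fintype ι] [DecidableEq ι] (u : ι → ℂ) :
    (ip u u • (1 : Matrix ι ι ℂ) - op u u).PosSemidef := by
  by_cases h : ip u u = 0
  · have := ip_zero u h
    subst this
    have e : op (0 : ι → ℂ) 0 = 0 := by ext; simp [op]
    rw [h, e]; simpa using Matrix.PosSemidef.zero
  · have := P_pos u 0 (by simp [ip])
    have h0 : 0 ≤ ip u u := by
      rw [ip_self]; exact_mod_cast (Finset.sum_nonneg fun _ _ => by positivity)
    have h1 := this.smul h0
    convert h1 using 1
    have e : op (0 : ι → ℂ) 0 = 0 := by ext; simp [op]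
    rw [e, smul_zero, sub_zero, smul_sub, smul_smul, mul_inv_cancel₀ h, one_smul]

/-- vertex (-1,-1) -/
lemma vert1 {ι : Type} [Fintype ι] [DecidableEq ι] (Ψ : Matrix (Fin 2) ι ℂ) :
    nrm Ψ • 1 - pr Ψ - liftS flipL (pr Ψ) ∈ SS ι := by
  have e : nrm Ψ • 1 - pr Ψ - liftS flipL (pr Ψ) =
      krS 1 ((ip (Ψ 0) (Ψ 0) • (1 : Matrix ι ι ℂ) - op (Ψ 0) (Ψ 0))
        + (ip (Ψ 1) (Ψ 1) • (1 : Matrix ι ι ℂ) - op (Ψ 1) (Ψ 1))) := by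
    ext ⟨a, m⟩ ⟨b, n⟩
    by_cases hmn : m = n <;> fin_cases a <;> fin_cases b <;>
      simp [krS, op, liftS, flipL, pr, nrm, Matrix.one_apply, hmn] <;> ring
  rw [e]
  exact SS_kr Matrix.PosSemidef.one ((one_sub_pos _).add (one_sub_pos _))

lemma vert2_orth {ι : Type} [Fintype ι] [DecidableEq ι] (Ψ : Matrix (Fin 2) ι ℂ)
    (h : ip (Ψ 0) (Ψ 1) = 0) :
    nrm Ψ • 1 - pr Ψ ∈ SS ι := by
  obtain ⟨a, ha⟩ : ∃ a : ℝ, a = ∑ m, ‖Ψ 0 m‖ ^ 2 := ⟨_, rfl⟩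
  obtain ⟨b, hb⟩ : ∃ b : ℝ, b = ∑ m, ‖Ψ 1 m‖ ^ 2 := ⟨_, rfl⟩
  have ha0 : 0 ≤ a := by rw [ha]; exact Finset.sum_nonneg fun _ _ => by positivity
  have hb0 : 0 ≤ b := by rw [hb]; exact Finset.sum_nonneg fun _ _ => by positivity
  have hA : ip (Ψ 0) (Ψ 0) = a := by rw [ip_self, ha]
  have hB : ip (Ψ 1) (Ψ 1) = b := by rw [ip_self, hb]
  have hP := P_pos _ _ h
  have hT : nrm Ψ = ((a + b : ℝ) : ℂ) := by simp [nrm, hA, hB]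
  have hTP := SS_kr (Matrix.PosSemidef.one (n := Fin 2) (R := ℂ)) hP
  have e : nrm Ψ • 1 - pr Ψ = ((a + b : ℝ) : ℂ) • krS 1 ((1 : Matrix ι ι ℂ)
        - (ip (Ψ 0) (Ψ 0))⁻¹ • op (Ψ 0) (Ψ 0) - (ip (Ψ 1) (Ψ 1))⁻¹ • op (Ψ 1) (Ψ 1))
      + krS !![1, 0; 0, 0] (op (Ψ 1) (Ψ 1)) + krS !![0, 0; 0, 1] (op (Ψ 0) (Ψ 0))
      + (((a * b)⁻¹ : ℝ) : ℂ) • WW ((b : ℂ) • Ψ 0) ((-a : ℂ) • Ψ 1) := by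
    rw [hT, hA, hB]
    have hu : a = 0 → Ψ 0 = 0 := fun h0 => ip_zero _ (by rw [hA, h0]; simp)
    have hv : b = 0 → Ψ 1 = 0 := fun h0 => ip_zero _ (by rw [hB, h0]; simp)
    ext ⟨i, m⟩ ⟨j, n⟩
    by_cases h1 : a = 0
    · have hu := hu h1
      subst h1
      by_cases h2 : b = 0
      · have hv := hv h2
        subst h2
        by_cases hmn : m = n <;> fin_cases i <;> fin_cases j <;>
          simp [krS, op, pr, WW, hu, hv, hmn]
      · have h2' : (b : ℂ) ≠ 0 := by exact_mod_cast h2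
        by_cases hmn : m = n <;> fin_cases i <;> fin_cases j <;>
          simp [krS, op, pr, WW, hu, hmn] <;> field_simp <;> ring
    · have h1' : (a : ℂ) ≠ 0 := by exact_mod_cast h1
      by_cases h2 : b = 0
      · have hv := hv h2
        subst h2
        by_cases hmn : m = n <;> fin_cases i <;> fin_cases j <;>
          simp [krS, op, pr, WW, hv, hmn] <;> field_simp <;> ring
      · have h2' : (b : ℂ) ≠ 0 := by exact_mod_cast h2
        by_cases hmn : m = n <;> fin_cases i <;> fin_cases j <;>
          simp [krS, op, pr, WW, hmn] <;> field_simp <;> ring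
  rw [e]
  exact add_mem (add_mem (add_mem (SS_smul hTP _ (by positivity)) (SS_kr E00_pos (op_pos _)))
    (SS_kr E11_pos (op_pos _))) (SS_smul (WW_mem _ _) _ (by positivity))

lemma nrm_eq {ι : Type} [Fintype ι] (Ψ : Matrix (Fin 2) ι ℂ) :
    nrm Ψ = (Ψ * Ψ.conjTranspose).trace := by
  simp [nrm, Matrix.trace, Fin.sum_univ_two, Matrix.mul_apply, ip]

lemma conjL_apply (U A : Matrix (Fin 2) (Fin 2) ℂ) (a b : Fin 2) : conjL U A a b =
    (U a 0 * A 0 0 + U a 1 * A 1 0) * star (U b 0)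
      + (U a 0 * A 0 1 + U a 1 * A 1 1) * star (U b 1) := by
  simp [conjL, Matrix.mul_apply, Fin.sum_univ_two]

/-- vertex (-1,0) -/
lemma vert2 {ι : Type} [Fintype ι] [DecidableEq ι] (Ψ : Matrix (Fin 2) ι ℂ) :
    nrm Ψ • 1 - pr Ψ ∈ SS ι := by
  have hG : (Ψ * Ψ.conjTranspose).IsHermitian := Matrix.isHermitian_mul_conjTranspose_self Ψ
  obtain ⟨U, d, hU, hU', hd⟩ : ∃ (U : Matrix (Fin 2) (Fin 2) ℂ) (d : Fin 2 → ℂ),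
      U * U.conjTranspose = 1 ∧ U.conjTranspose * U = 1 ∧
      Ψ * Ψ.conjTranspose = U * Matrix.diagonal d * U.conjTranspose := by
    refine ⟨hG.eigenvectorUnitary, fun i => hG.eigenvalues i, ?_, ?_, ?_⟩
    · exact Unitary.mul_star_self_of_mem hG.eigenvectorUnitary.2
    · exact Unitary.star_mul_self_of_mem hG.eigenvectorUnitary.2
    · have := hG.spectral_theorem
      rw [Unitary.conjStarAlgAut_apply] at this
      exact this
  have hΦ : Ψ = U * (U.conjTranspose * Ψ) := by rw [← Matrix.mul_assoc, hU, Matrix.one_mul]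
  have hD : (U.conjTranspose * Ψ) * (U.conjTranspose * Ψ).conjTranspose = Matrix.diagonal d := by
    rw [Matrix.conjTranspose_mul, Matrix.conjTranspose_conjTranspose]
    calc _ = U.conjTranspose * (Ψ * Ψ.conjTranspose) * U := by simp only [Matrix.mul_assoc]
      _ = (U.conjTranspose * U) * Matrix.diagonal d * (U.conjTranspose * U) := by
        rw [hd]; simp only [Matrix.mul_assoc]
      _ = _ := by rw [hU', Matrix.one_mul, Matrix.mul_one]
  have hn : nrm Ψ = nrm (U.conjTranspose * Ψ) := by
    rw [nrm_eq, nrm_eq, hD, hd, Matrix.trace_mul_comm, ← Matrix.mul_assoc, hU', Matrix.one_mul]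
  generalize U.conjTranspose * Ψ = Φ at *
  have ho : ip (Φ 0) (Φ 1) = 0 := by
    have := congrFun (congrFun hD 0) 1
    simpa [Matrix.mul_apply, ip] using this
  have := liftS_mem (conjL U) (conjL_pos U) (vert2_orth Φ ho)
  convert this using 1
  rw [liftS_sub, liftS_smul, hn]
  congr 1
  · congr 1
    ext ⟨a, m⟩ ⟨b, n⟩
    by_cases hmn : m = n
    · subst hmn
      have : (fun c d => (1 : Matrix (Fin 2 × ι) (Fin 2 × ι) ℂ) (c, m) (d, m)) =
        (1 : Matrix (Fin 2) (Fin 2) ℂ) := by ext c d; simp [Matrix.one_apply]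
      simp only [liftS, this]
      simp [conjL, hU, Matrix.one_apply]
    · have : (fun c d => (1 : Matrix (Fin 2 × ι) (Fin 2 × ι) ℂ) (c, m) (d, n)) =
        (0 : Matrix (Fin 2) (Fin 2) ℂ) := by ext c d; simp [Matrix.one_apply, hmn]
      simp only [liftS, this]
      simp [Matrix.one_apply, hmn]
  · rw [hΦ]
    ext ⟨a, m⟩ ⟨b, n⟩
    refine Eq.trans ?_ (conjL_apply U (fun c d => pr Φ (c, m) (d, n)) a b).symm
    simp only [pr]
    simp [Matrix.mul_apply, Fin.sum_univ_two]
    ring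

/-- vertex (0,-1) -/
lemma vert3 {ι : Type} [Fintype ι] [DecidableEq ι] (Ψ : Matrix (Fin 2) ι ℂ) :
    nrm Ψ • 1 - liftS flipL (pr Ψ) ∈ SS ι := by
  have := liftS_mem flipL flipL_pos (vert2 Ψ)
  rwa [liftS_sub, liftS_smul, flipS_one] at this

lemma pure_mem {ι : Type} [Fintype ι] [DecidableEq ι] (Ψ : Matrix (Fin 2) ι ℂ) (α β : ℝ)
    (hα : max (-1) (β / 2 - 1) ≤ α) (hβ : max (-1) (α / 2 - 1) ≤ β) :
    nrm Ψ • 1 + (α : ℂ) • pr Ψ + (β : ℂ) • liftS flipL (pr Ψ) ∈ SS ι := by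
  obtain ⟨h1, h2⟩ := max_le_iff.1 hα
  obtain ⟨h3, h4⟩ := max_le_iff.1 hβ
  obtain ⟨l1, l2, l3, s, t, g1, g2, g3, g4, g5, e0, e1, e2⟩ : ∃ l1 l2 l3 s t : ℝ,
      0 ≤ l1 ∧ 0 ≤ l2 ∧ 0 ≤ l3 ∧ 0 ≤ s ∧ 0 ≤ t ∧ l1 + l2 + l3 = 1 ∧
      α = -l1 - l2 + s + 2 * t ∧ β = -l1 - l3 + 2 * s + t := by
    by_cases hs : α + β ≤ -1
    · exact ⟨-α - β - 1, 1 + β, 1 + α, 0, 0, by linarith, by linarith, by linarith, le_rfl,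
        le_rfl, by ring, by ring, by ring⟩
    · push Not at hs
      have m0 : 0 ≤ max 0 ((α - 2 * β + 1) / 3) := le_max_left _ _
      have m1 : (α - 2 * β + 1) / 3 ≤ max 0 ((α - 2 * β + 1) / 3) := le_max_right _ _
      have m2 : max 0 ((α - 2 * β + 1) / 3) ≤ 1 := max_le (by norm_num) (by linarith)
      have m3 : max 0 ((α - 2 * β + 1) / 3) ≤ (2 * α - β + 2) / 3 :=
        max_le (by linarith) (by linarith)
      generalize max 0 ((α - 2 * β + 1) / 3) = μ at *
      exact ⟨0, 1 - μ, μ, (2 * β - α - 1) / 3 + μ, (2 * α - β + 2) / 3 - μ, le_rfl,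
        by linarith, by linarith, by linarith, by linarith, by ring, by ring, by ring⟩
  have key := add_mem (add_mem (add_mem (add_mem (SS_smul (vert1 Ψ) l1 g1)
    (SS_smul (vert2 Ψ) l2 g2)) (SS_smul (vert3 Ψ) l3 g3)) (SS_smul (ray12 Ψ) s g4))
    (SS_smul (ray21 Ψ) t g5)
  convert key using 1
  have e0' : (l3 : ℂ) = 1 - l1 - l2 := by
    have : l3 = 1 - l1 - l2 := by linarith
    rw [this]; push_cast; ring
  rw [e1, e2]
  push_cast
  rw [e0']
  module

lemma liftS_sum {ι κ : Type} (L : Matrix (Fin 2) (Fin 2) ℂ →ₗ[ℂ] Matrix (Fin 2) (Fin 2) ℂ)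
    (s : Finset κ) (M : κ → Matrix (Fin 2 × ι) (Fin 2 × ι) ℂ) :
    liftS L (∑ k ∈ s, M k) = ∑ k ∈ s, liftS L (M k) := by
  classical
  induction s using Finset.induction_on with
  | empty =>
    ext x y
    exact congrFun (congrFun L.map_zero x.1) y.1
  | insert a s ha ih => rw [Finset.sum_insert ha, Finset.sum_insert ha, liftS_add, ih]

/-- Configurations of the qubits other than `i`. -/
abbrev Rst {N : ℕ} (i : Fin N) : Type := {j // j ∈ ({i} : Finset (Fin N))ᶜ} → Fin 2

/-- Splitting off qubit `i`. -/
def spl {N : ℕ} (i : Fin N) : (Fin N → Fin 2) ≃ Fin 2 × Rst i where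
  toFun x := (x i, fun j => x j.1)
  invFun p := fun j => if h : j = i then p.1 else p.2 ⟨j, by simpa using h⟩
  left_inv x := by
    ext j
    by_cases h : j = i
    · subst h; simp
    · simp [h]
  right_inv p := by
    obtain ⟨a, m⟩ := p
    ext j
    · simp
    · have hj : j.1 ≠ i := by
        have := j.2
        rwa [Finset.mem_compl, Finset.mem_singleton] at this
      simp [hj]

lemma sep_of_SS {N : ℕ} (i : Fin N) (M : Matrix (Fin 2 × Rst i) (Fin 2 × Rst i) ℂ)
    (hM : M ∈ SS (Rst i)) : SepAcross {i} (M.submatrix (spl i) (spl i)) := by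
  induction hM using AddSubmonoid.closure_induction with
  | mem M h =>
    obtain ⟨A, B, hA, hB, rfl⟩ := h
    refine ⟨1, fun _ => A.submatrix (fun f => f ⟨i, by simp⟩) (fun f => f ⟨i, by simp⟩),
      fun _ => B, fun _ => hA.submatrix _, fun _ => hB, ?_⟩
    intro x y
    simp [krS, spl]
  | zero => exact ⟨0, Fin.elim0, Fin.elim0, fun k => k.elim0, fun k => k.elim0, by simp⟩
  | add M M' _ _ h h' =>
    obtain ⟨K, A, B, hA, hB, h⟩ := h
    obtain ⟨K', A', B', hA', hB', h'⟩ := h'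
    refine ⟨K + K', Fin.append A A', Fin.append B B', ?_, ?_, ?_⟩
    · intro k
      refine Fin.addCases (fun k => ?_) (fun k => ?_) k
      · simpa using hA k
      · simpa using hA' k
    · intro k
      refine Fin.addCases (fun k => ?_) (fun k => ?_) k
      · simpa using hB k
      · simpa using hB' k
    · intro x y
      rw [Fin.sum_univ_add]
      simp only [Fin.append_left, Fin.append_right]
      rw [← h, ← h']
      rfl

lemma pauliYat_spl {N : ℕ} (i : Fin N) (p q : Fin 2 × Rst i) :
    pauliYat {i} ((spl i).symm p) ((spl i).symm q) =
      pauliY p.1 q.1 * if p.2 = q.2 then 1 else 0 := by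
  unfold pauliYat
  rw [← Finset.mul_prod_erase Finset.univ _ (Finset.mem_univ i)]
  congr 1
  · simp [spl]
  · split_ifs with h
    · refine Finset.prod_eq_one fun j hj => ?_
      have hj : j ≠ i := by simpa using hj
      simp [hj, spl, h]
    · obtain ⟨j, hj⟩ := Function.ne_iff.1 h
      have hji : j.1 ≠ i := by
        have := j.2
        rwa [Finset.mem_compl, Finset.mem_singleton] at this
      refine Finset.prod_eq_zero (i := j.1) (by simpa using hji) ?_
      simp [hji, spl, hj]

lemma pt_spl {N : ℕ} (i : Fin N) (ρ : Matrix (Fin N → Fin 2) (Fin N → Fin 2) ℂ)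
    (a b : Fin 2) (m n : Rst i) :
    pt {i} ρ ((spl i).symm (a, m)) ((spl i).symm (b, n)) =
      ρ ((spl i).symm (b, m)) ((spl i).symm (a, n)) := by
  unfold pt
  congr 1 <;>
  · ext j
    by_cases hj : j = i
    · subst hj; simp [spl]
    · simp [spl, hj]

lemma tilde_spl {N : ℕ} (i : Fin N) (ρ : Matrix (Fin N → Fin 2) (Fin N → Fin 2) ℂ) :
    (tildeAt {i} ρ).submatrix (spl i).symm (spl i).symm =
      liftS flipL (ρ.submatrix (spl i).symm (spl i).symm) := by
  ext ⟨a, m⟩ ⟨b, n⟩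
  simp only [tildeAt, Matrix.submatrix_apply, Matrix.mul_apply]
  rw [← (spl i).symm.sum_comp]
  simp_rw [← (spl i).symm.sum_comp (fun j => pauliYat {i} _ j * pt {i} ρ j _)]
  simp only [pauliYat_spl, pt_spl, Fintype.sum_prod_type, Fin.sum_univ_two]
  simp only [mul_ite, ite_mul, mul_one, mul_zero, zero_mul, Finset.sum_ite_eq,
    Finset.sum_ite_eq', Finset.mem_univ, if_true]
  fin_cases a <;> fin_cases b <;> simp [pauliY, liftS, flipL] <;> ring_nf <;> simp

open scoped MatrixOrder Matrix.Norms.L2Operator in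
lemma exists_factor {n : Type} [Fintype n] [DecidableEq n] (ρ : Matrix n n ℂ)
    (hρ : ρ.PosSemidef) : ∃ B : Matrix n n ℂ, ρ = B.conjTranspose * B :=
  CStarAlgebra.nonneg_iff_eq_star_mul_self.mp hρ.nonneg

lemma one_mem_sep {N : ℕ} (i : Fin N) (ρ : Matrix (Fin N → Fin 2) (Fin N → Fin 2) ℂ)
    (hρ : ρ.PosSemidef) (α β : ℝ)
    (hα : max (-1) (β / 2 - 1) ≤ α) (hβ : max (-1) (α / 2 - 1) ≤ β) :
    SepAcross {i} (ρ.trace • (1 : Matrix (Fin N → Fin 2) (Fin N → Fin 2) ℂ) + (α : ℂ) • ρ +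
            (β : ℂ) • tildeAt {i} ρ) := by
  obtain ⟨B, hB⟩ := exists_factor ρ hρ
  let Ψ : (Fin N → Fin 2) → Matrix (Fin 2) (Rst i) ℂ :=
    fun k a m => star (B k ((spl i).symm (a, m)))
  have hR : ρ.submatrix (spl i).symm (spl i).symm = ∑ k, pr (Ψ k) := by
    ext p q
    rw [hB, Matrix.sum_apply]
    simp [Matrix.mul_apply, pr, Ψ]
  have hT : ρ.trace = ∑ k, nrm (Ψ k) := by
    have : ρ.trace = (ρ.submatrix (spl i).symm (spl i).symm).trace := by
      simp only [Matrix.trace, Matrix.diag, Matrix.submatrix_apply]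
      exact ((spl i).symm.sum_comp (fun x => ρ x x)).symm
    rw [this, hR, Matrix.trace_sum]
    refine Finset.sum_congr rfl fun k _ => ?_
    simp [Matrix.trace, pr, nrm, ip, Fintype.sum_prod_type, Fin.sum_univ_two]
  have hm := AddSubmonoid.sum_mem (SS (Rst i)) (t := Finset.univ)
    (fun k _ => pure_mem (Ψ k) α β hα hβ)
  have hs := sep_of_SS i _ hm
  convert hs using 1
  rw [Finset.sum_add_distrib, Finset.sum_add_distrib, ← Finset.sum_smul, ← Finset.smul_sum,
    ← Finset.smul_sum, ← liftS_sum, ← hT, ← hR, ← tilde_spl]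
  ext x y
  simp [Matrix.one_apply]

/-- A convex mixture of Breuer-Hall-inspired maps produces a mixture of states each
biseparable across some `1:(N-1)` bipartition. -/
theorem stmt17 (N : ℕ) (hN : 2 ≤ N)
    (ρ : Matrix (Fin N → Fin 2) (Fin N → Fin 2) ℂ) (hρ : ρ.PosSemidef)
    (p : Fin N → ℝ) (hp : ∀ i, 0 ≤ p i) (hpsum : ∑ i, p i = 1)
    (α β : Fin N → ℝ)
    (hα : ∀ i, max (-1) (β i / 2 - 1) ≤ α i)
    (hβ : ∀ i, max (-1) (α i / 2 - 1) ≤ β i) :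
    ∃ τ : Fin N → Matrix (Fin N → Fin 2) (Fin N → Fin 2) ℂ,
      (∀ i, SepAcross {i} (τ i)) ∧
      ∑ i, (p i : ℂ) •
          (ρ.trace • (1 : Matrix (Fin N → Fin 2) (Fin N → Fin 2) ℂ) + (α i : ℂ) • ρ +
            (β i : ℂ) • tildeAt {i} ρ) =
        ∑ i, (p i : ℂ) • τ i := by
  exact ⟨_, fun i => one_mem_sep i ρ hρ (α i) (β i) (hα i) (hβ i), rfl⟩
end
end
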